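/- Let s ∈ B_3^4 be an irreducible braid system of degree 3 and length 4 whose Hurwitz orbit s·B_4 is finite. Then #(s·B_4) ≤ 648. -/

import Mathlib

open FreeGroup in
/-- The braid relations on `m` strands (generators indexed 0-based by `Fin (m-1)`). -/
def braidRels (m : ℕ) : Set (FreeGroup (Fin (m - 1))) :=
  {r | ∃ i j : Fin (m - 1), (i.val + 2 ≤ j.val ∨ j.val + 2 ≤ i.val) ∧
        r = of i * of j * (of j * of i)⁻¹} ∪
  {r | ∃ i j : Fin (m - 1), (i.val + 1 = j.val ∨ j.val + 1 = i.val) ∧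
        r = of i * of j * of i * (of j * of i * of j)⁻¹}

/-- The braid group on `m` strands. -/
abbrev BraidGroup (m : ℕ) := PresentedGroup (braidRels m)

/-- The Artin generator `σ_i` (1-based index `1 ≤ i ≤ m-1`); junk value `1` out of range. -/
def braidGen (m : ℕ) (i : ℕ) : BraidGroup m :=
  if h : 1 ≤ i ∧ i ≤ m - 1 then PresentedGroup.of ⟨i - 1, by omega⟩ else 1

/-- A braid is periodic if some positive power of it is central. -/
def IsPeriodic {m : ℕ} (β : BraidGroup m) : Prop :=
  ∃ k : ℕ, 1 ≤ k ∧ β ^ k ∈ Subgroup.center (BraidGroup m)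

/-- The elementary Hurwitz move at (0-based) position `i`, as a bijection on `n`-tuples. -/
def hEquiv {G : Type*} [Group G] {n : ℕ} (i : Fin (n - 1)) : Equiv.Perm (Fin n → G) where
  toFun s := fun k =>
    if k.val = i.val then s ⟨i.val + 1, by have := i.isLt; omega⟩
    else if k.val = i.val + 1 then
      (s ⟨i.val + 1, by have := i.isLt; omega⟩)⁻¹ * s ⟨i.val, by have := i.isLt; omega⟩ *
        s ⟨i.val + 1, by have := i.isLt; omega⟩
    else s k
  invFun t := fun k =>
    if k.val = i.val then
      t ⟨i.val, by have := i.isLt; omega⟩ * t ⟨i.val + 1, by have := i.isLt; omega⟩ *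
        (t ⟨i.val, by have := i.isLt; omega⟩)⁻¹
    else if k.val = i.val + 1 then t ⟨i.val, by have := i.isLt; omega⟩
    else t k
  left_inv s := by
    funext k
    have hlt := i.isLt
    rcases k with ⟨kv, hkv⟩
    by_cases h1 : kv = i.val
    · subst h1
      simp [mul_assoc]
    · by_cases h2 : kv = i.val + 1
      · subst h2
        simp
      · simp [h1, h2]
  right_inv t := by
    funext k
    have hlt := i.isLt
    rcases k with ⟨kv, hkv⟩
    by_cases h1 : kv = i.val
    · subst h1
      simp [mul_assoc]
    · by_cases h2 : kv = i.val + 1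
      · subst h2
        simp [mul_assoc]
      · simp [h1, h2]

/-- The (right) Hurwitz action of a word in the generators `σ_1, …, σ_{n-1}` of `B_n`
on `n`-tuples of elements of a group `G`: `hurwitzAct (w₁ * w₂) s = hurwitzAct w₂ (hurwitzAct w₁ s)`. -/
def hurwitzAct {G : Type*} [Group G] {n : ℕ} (w : FreeGroup (Fin (n - 1))) (s : Fin n → G) :
    Fin n → G :=
  (MulOpposite.unop (FreeGroup.lift (fun i => MulOpposite.op (hEquiv (G := G) (n := n) i)) w)) s

/-- The Hurwitz orbit of a braid system. -/
def hurwitzOrbit {G : Type*} [Group G] {n : ℕ} (s : Fin n → G) : Set (Fin n → G) :=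
  {t | ∃ w : FreeGroup (Fin (n - 1)), hurwitzAct w s = t}

/-- The generator `σ_i` (1-based) as a word acting on length-`n` systems. -/
def genWord (n : ℕ) (i : ℕ) : FreeGroup (Fin (n - 1)) :=
  if h : 1 ≤ i ∧ i ≤ n - 1 then FreeGroup.of ⟨i - 1, by omega⟩ else 1

/-- The pure braid word `c_i = (σ_1⁻¹ ⋯ σ_{i-1}⁻¹) σ_i² (σ_{i-1} ⋯ σ_1)`. -/
def cWord (n : ℕ) (i : ℕ) : FreeGroup (Fin (n - 1)) :=
  ((List.range (i - 1)).map (fun t => (genWord n (t + 1))⁻¹)).prod *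
    genWord n i ^ 2 *
    ((List.range (i - 1)).reverse.map (fun t => genWord n (t + 1))).prod

/-- The word `Δ_{(i,j)} = (σ_i σ_{i+1} ⋯ σ_j)(σ_i ⋯ σ_{j-1}) ⋯ (σ_i σ_{i+1})(σ_i)`. -/
def deltaWord (n i j : ℕ) : FreeGroup (Fin (n - 1)) :=
  ((List.range (j - i + 1)).map (fun t =>
    ((List.range (j - t - i + 1)).map (fun u => genWord n (i + u))).prod)).prod

/-- The exponent-sum homomorphism, valued in `Multiplicative ℤ`. -/
def expSumHom {m : ℕ} : BraidGroup m →* Multiplicative ℤ :=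
  PresentedGroup.toGroup (f := fun _ => Multiplicative.ofAdd 1) (by
    rintro r (⟨i, j, -, rfl⟩ | ⟨i, j, -, rfl⟩) <;>
      simp <;> group)

/-- The exponent sum of a braid: `e(σ_i) = 1`. -/
def esum {m : ℕ} (β : BraidGroup m) : ℤ := Multiplicative.toAdd (expSumHom β)

/-- A braid system is reducible if some non-trivial partition of the index set has all
entries from the two parts commuting. -/
def IsReducible {G : Type*} [Group G] {n : ℕ} (s : Fin n → G) : Prop :=
  ∃ I : Set (Fin n), I.Nonempty ∧ Iᶜ.Nonempty ∧ ∀ i ∈ I, ∀ j ∈ Iᶜ, Commute (s i) (s j)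


/-! ### Two by two integer matrices -/

/-- Shorthand for the special linear group of two by two integer matrices. -/
abbrev SLZ := Matrix.SpecialLinearGroup (Fin 2) ℤ

/-- The trace. -/
def tz (A : SLZ) : ℤ := A.1 0 0 + A.1 1 1

/-- Scalar matrices. -/
def scz (A : SLZ) : Prop := A.1 0 1 = 0 ∧ A.1 1 0 = 0 ∧ A.1 0 0 = A.1 1 1

lemma slz_det (A : SLZ) : A.1 0 0 * A.1 1 1 - A.1 0 1 * A.1 1 0 = 1 := by
  have := A.2
  rwa [Matrix.det_fin_two] at this

lemma slz_mul (A B : SLZ) :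
    (A * B).1 0 0 = A.1 0 0 * B.1 0 0 + A.1 0 1 * B.1 1 0 ∧
    (A * B).1 0 1 = A.1 0 0 * B.1 0 1 + A.1 0 1 * B.1 1 1 ∧
    (A * B).1 1 0 = A.1 1 0 * B.1 0 0 + A.1 1 1 * B.1 1 0 ∧
    (A * B).1 1 1 = A.1 1 0 * B.1 0 1 + A.1 1 1 * B.1 1 1 := by
  have h : (A * B).1 = A.1 * B.1 := rfl
  rw [h]
  refine ⟨?_, ?_, ?_, ?_⟩ <;> simp [Matrix.mul_apply, Fin.sum_univ_two]

lemma slz_inv (A : SLZ) :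
    (A⁻¹).1 0 0 = A.1 1 1 ∧ (A⁻¹).1 0 1 = - A.1 0 1 ∧
    (A⁻¹).1 1 0 = - A.1 1 0 ∧ (A⁻¹).1 1 1 = A.1 0 0 := by
  have h : (A⁻¹).1 = A.1.adjugate := rfl
  rw [h, Matrix.adjugate_fin_two]
  simp

lemma slz_ext {A B : SLZ} (h1 : A.1 0 0 = B.1 0 0) (h2 : A.1 0 1 = B.1 0 1)
    (h3 : A.1 1 0 = B.1 1 0) (h4 : A.1 1 1 = B.1 1 1) : A = B := by
  apply Subtype.ext
  ext i j
  fin_cases i <;> fin_cases j <;> assumption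

lemma slz_comm_iff (A B : SLZ) : Commute A B ↔
    (A.1 0 1 * B.1 1 0 = A.1 1 0 * B.1 0 1 ∧
     A.1 0 1 * (B.1 0 0 - B.1 1 1) = B.1 0 1 * (A.1 0 0 - A.1 1 1) ∧
     A.1 1 0 * (B.1 0 0 - B.1 1 1) = B.1 1 0 * (A.1 0 0 - A.1 1 1)) := by
  obtain ⟨h1, h2, h3, h4⟩ := slz_mul A B
  obtain ⟨k1, k2, k3, k4⟩ := slz_mul B A
  constructor
  · intro h
    have h : A * B = B * A := h
    rw [h] at h1 h2 h3 h4
    refine ⟨?_, ?_, ?_⟩ <;> linarith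
  · rintro ⟨e1, e2, e3⟩
    apply slz_ext
    · rw [h1, k1]; linarith
    · rw [h2, k2]; linarith
    · rw [h3, k3]; linarith
    · rw [h4, k4]; linarith

lemma slz_comm_trans {A B C : SLZ} (hB : ¬ scz B) (h1 : Commute A B) (h2 : Commute B C) :
    Commute A C := by
  rw [slz_comm_iff] at *
  obtain ⟨p1, p2, p3⟩ := h1
  obtain ⟨q1, q2, q3⟩ := h2
  unfold scz at hB
  generalize A.1 0 1 = a1 at *
  generalize A.1 1 0 = a2 at *
  generalize B.1 0 1 = b1 at *
  generalize B.1 1 0 = b2 at *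
  generalize C.1 0 1 = c1 at *
  generalize C.1 1 0 = c2 at *
  have hb : b1 ≠ 0 ∨ b2 ≠ 0 ∨ B.1 0 0 - B.1 1 1 ≠ 0 := by
    by_contra! hc
    exact hB ⟨hc.1, hc.2.1, by linarith [hc.2.2]⟩
  generalize A.1 0 0 - A.1 1 1 = a3 at *
  generalize B.1 0 0 - B.1 1 1 = b3 at *
  generalize C.1 0 0 - C.1 1 1 = c3 at *
  rcases hb with hb | hb | hb
  · refine ⟨mul_left_cancel₀ hb ?_, mul_left_cancel₀ hb ?_, mul_left_cancel₀ hb ?_⟩ <;> grind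
  · refine ⟨mul_left_cancel₀ hb ?_, mul_left_cancel₀ hb ?_, mul_left_cancel₀ hb ?_⟩ <;> grind
  · refine ⟨mul_left_cancel₀ hb ?_, mul_left_cancel₀ hb ?_, mul_left_cancel₀ hb ?_⟩ <;> grind

lemma abs_le_one_cases {x : ℤ} (h : |x| ≤ 1) : x = -1 ∨ x = 0 ∨ x = 1 := by
  rw [abs_le] at h; omega

lemma slz_tz_mul (A B : SLZ) : tz (A * B) =
    A.1 0 0 * B.1 0 0 + A.1 0 1 * B.1 1 0 + A.1 1 0 * B.1 0 1 + A.1 1 1 * B.1 1 1 := by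
  obtain ⟨h1, h2, h3, h4⟩ := slz_mul A B
  unfold tz; rw [h1, h4]; ring

lemma slz_ell_comm_aux {A B : SLZ} (hA : |tz A| ≤ 1)
    (hAB : (2 * tz (A * B) - tz A * tz B) ^ 2 - (4 - tz A ^ 2) * (4 - tz B ^ 2) ≤ 0) :
    Commute A B := by
  rw [slz_comm_iff]
  have dA := slz_det A
  have dB := slz_det B
  rw [slz_tz_mul] at hAB
  unfold tz at hA hAB
  generalize A.1 0 0 = a at *
  generalize A.1 0 1 = b at *
  generalize A.1 1 0 = c at *
  generalize A.1 1 1 = d at *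
  generalize B.1 0 0 = e at *
  generalize B.1 0 1 = f at *
  generalize B.1 1 0 = g at *
  generalize B.1 1 1 = h at *
  obtain ⟨x, hx⟩ : ∃ x, x = a + d := ⟨_, rfl⟩
  obtain ⟨y, hy⟩ : ∃ x, x = e + h := ⟨_, rfl⟩
  obtain ⟨z, hz⟩ : ∃ x, x = a * e + b * g + c * f + d * h := ⟨_, rfl⟩
  rw [← hx] at hA
  rw [← hx, ← hy, ← hz] at hAB
  obtain ⟨p, hp⟩ : ∃ p, p = (a - d) * g - (e - h) * c := ⟨_, rfl⟩
  obtain ⟨q, hq⟩ : ∃ p, p = (a - d) * f - (e - h) * b := ⟨_, rfl⟩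
  obtain ⟨r, hr⟩ : ∃ p, p = b * g - c * f := ⟨_, rfl⟩
  have hD : 4 - x ^ 2 = - (a - d) ^ 2 - 4 * b * c := by rw [hx]; linear_combination (-4) * dA
  have hD' : 4 - y ^ 2 = - (e - h) ^ 2 - 4 * f * g := by rw [hy]; linear_combination (-4) * dB
  have hN : 2 * z - x * y = (a - d) * (e - h) + 2 * b * g + 2 * c * f := by
    rw [hx, hy, hz]; ring
  have h1 : (2 * z - x * y) ^ 2 - (4 - x ^ 2) * (4 - y ^ 2) = 4 * (r ^ 2 - p * q) := by
    rw [hN, hD, hD', hp, hq, hr]; ring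
  have h2 : 4 * c ^ 2 * (r ^ 2 - p * q) = (2 * c * r + (a - d) * p) ^ 2 + (4 - x ^ 2) * p ^ 2 := by
    rw [hD, hp, hq, hr]; ring
  have h3 := hAB
  have h4 : 3 ≤ 4 - x ^ 2 := by
    rcases abs_le_one_cases hA with h | h | h <;> rw [h] <;> norm_num
  have hc : c ≠ 0 := by
    rintro rfl
    nlinarith [sq_nonneg (a - d)]
  have h5 : (2 * c * r + (a - d) * p) ^ 2 + (4 - x ^ 2) * p ^ 2 ≤ 0 := by
    rw [← h2]
    nlinarith [sq_nonneg c]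
  have hp0 : p = 0 := by
    by_contra hne
    have : 0 < p ^ 2 := by positivity
    nlinarith [sq_nonneg (2 * c * r + (a - d) * p)]
  rw [hp0] at h5
  have hr0 : r = 0 := by
    have e : (2 * c * r + (a - d) * 0) ^ 2 + (4 - x ^ 2) * 0 ^ 2 = 4 * (c * r) ^ 2 := by ring
    rw [e] at h5
    have h6 : (c * r) ^ 2 = 0 := le_antisymm (by linarith) (sq_nonneg _)
    have h7 : c * r = 0 := (pow_eq_zero_iff two_ne_zero).mp h6
    exact (mul_eq_zero.mp h7).resolve_left hc
  have hq0 : q = 0 := by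
    have : c * q = b * p - (a - d) * r := by rw [hp, hq, hr]; ring
    rw [hp0, hr0] at this
    have h7 : c * q = 0 := by linarith
    exact (mul_eq_zero.mp h7).resolve_left hc
  refine ⟨by linarith, by linarith, by linarith⟩

lemma slz_ell_comm {A B : SLZ} (hA : |tz A| ≤ 1) (hB : |tz B| ≤ 1) (hAB : |tz (A * B)| ≤ 1) :
    Commute A B := by
  apply slz_ell_comm_aux hA
  rcases abs_le_one_cases hA with h | h | h <;> rcases abs_le_one_cases hB with h' | h' | h' <;>
    rcases abs_le_one_cases hAB with h'' | h'' | h'' <;> rw [h, h', h''] <;> norm_num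

lemma slz_tz_conj (A B : SLZ) : tz (B⁻¹ * A * B) = tz A := by
  obtain ⟨h1, h2, h3, h4⟩ := slz_mul B⁻¹ A
  obtain ⟨i1, i2, i3, i4⟩ := slz_inv B
  rw [slz_tz_mul, h1, h2, h3, h4, i1, i2, i3, i4]
  unfold tz
  linear_combination (A.1 0 0 + A.1 1 1) * slz_det B

lemma slz_tz_inv (A : SLZ) : tz A⁻¹ = tz A := by
  obtain ⟨i1, i2, i3, i4⟩ := slz_inv A
  unfold tz; rw [i1, i4]; ring

lemma slz_scz_iff (A : SLZ) : scz A ↔ (A = 1 ∨ A = -1) := by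
  constructor
  · rintro ⟨h1, h2, h3⟩
    have d := slz_det A
    rw [h1, h2, ← h3] at d
    have : A.1 0 0 = 1 ∨ A.1 0 0 = -1 := by
      have : (A.1 0 0 - 1) * (A.1 0 0 + 1) = 0 := by linarith
      rcases mul_eq_zero.mp this with h | h
      · left; linarith
      · right; linarith
    rcases this with h | h
    · left; apply slz_ext <;> simp [h1, h2, ← h3, h]
    · right; apply slz_ext <;> simp [h1, h2, ← h3, h]
  · rintro (rfl | rfl) <;> simp [scz]

/-- Coefficients of powers in terms of Cayley--Hamilton. -/
def chebU (t : ℤ) : ℕ → ℤ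
  | 0 => 0
  | 1 => 1
  | (n + 2) => t * chebU t (n + 1) - chebU t n

lemma chebU_grow {t : ℤ} (ht : 2 ≤ |t|) (n : ℕ) : |chebU t n| < |chebU t (n + 1)| := by
  induction n with
  | zero => simp [chebU]
  | succ n ih =>
    have h : chebU t (n + 1 + 1) = t * chebU t (n + 1) - chebU t n := rfl
    rw [h]
    have h1 := abs_sub_abs_le_abs_sub (t * chebU t (n + 1)) (chebU t n)
    rw [abs_mul] at h1
    nlinarith [abs_nonneg (chebU t (n + 1))]

lemma chebU_ne {t : ℤ} (ht : 2 ≤ |t|) (n : ℕ) : chebU t (n + 1) ≠ 0 := by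
  have := chebU_grow ht n
  have h2 := abs_nonneg (chebU t n)
  intro h
  rw [h] at this
  simp at this
  linarith

lemma slz_pow (A : SLZ) (n : ℕ) :
    (A ^ (n + 1)).1 0 1 = chebU (tz A) (n + 1) * A.1 0 1 ∧
    (A ^ (n + 1)).1 1 0 = chebU (tz A) (n + 1) * A.1 1 0 ∧
    (A ^ (n + 1)).1 0 0 = chebU (tz A) (n + 1) * A.1 0 0 - chebU (tz A) n ∧
    (A ^ (n + 1)).1 1 1 = chebU (tz A) (n + 1) * A.1 1 1 - chebU (tz A) n := by
  induction n with
  | zero => simp [chebU]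
  | succ n ih =>
    obtain ⟨i1, i2, i3, i4⟩ := ih
    obtain ⟨h1, h2, h3, h4⟩ := slz_mul (A ^ (n + 1)) A
    rw [pow_succ A (n + 1), h1, h2, h3, h4, i1, i2, i3, i4]
    have h : chebU (tz A) (n + 1 + 1) = tz A * chebU (tz A) (n + 1) - chebU (tz A) n := rfl
    rw [h]
    have d := slz_det A
    have ht : tz A = A.1 0 0 + A.1 1 1 := rfl
    generalize chebU (tz A) (n + 1) = p at *
    generalize chebU (tz A) n = q at *
    rw [ht]
    refine ⟨by ring, by ring, ?_, ?_⟩ <;> linear_combination (-p) * d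

lemma slz_pow_comm {M A : SLZ} (hM : ¬ |tz M| ≤ 1) (n : ℕ) (h : Commute (M ^ (n + 1)) A) :
    Commute M A := by
  have ht : 2 ≤ |tz M| := by omega
  have hp := chebU_ne ht n
  obtain ⟨i1, i2, i3, i4⟩ := slz_pow M n
  rw [slz_comm_iff] at h ⊢
  rw [i1, i2, i3, i4] at h
  obtain ⟨h1, h2, h3⟩ := h
  refine ⟨mul_left_cancel₀ hp ?_, mul_left_cancel₀ hp ?_, mul_left_cancel₀ hp ?_⟩ <;> linarith

lemma slz_sq {A : SLZ} (h : tz A = 0) : scz (A ^ 2) := by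
  obtain ⟨i1, i2, i3, i4⟩ := slz_pow A 1
  refine ⟨?_, ?_, ?_⟩
  · rw [i1]; simp [chebU, h]
  · rw [i2]; simp [chebU, h]
  · rw [i3, i4]; simp [chebU, h]

lemma slz_cube {A : SLZ} (h : |tz A| = 1) : scz (A ^ 3) := by
  obtain ⟨i1, i2, i3, i4⟩ := slz_pow A 2
  have : chebU (tz A) (2 + 1) = 0 := by
    simp only [chebU]
    have : (tz A) ^ 2 = 1 := by rw [← sq_abs, h]; norm_num
    linarith
  refine ⟨?_, ?_, ?_⟩
  · rw [i1, this]; ring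
  · rw [i2, this]; ring
  · rw [i3, i4, this]; ring

lemma slz_scalar_tz {A : SLZ} (h : scz A) : |tz A| = 2 := by
  rcases (slz_scz_iff A).mp h with rfl | rfl <;> simp [tz]

/-- Commuting elliptic matrices with elliptic product agree up to sign and have order three. -/
lemma slz_ell_eq {U V : SLZ} (hU : |tz U| ≤ 1) (hV : |tz V| ≤ 1) (hUV : |tz (U * V)| ≤ 1)
    (hc : Commute U V) : |tz U| = 1 ∧ (V = U ∨ V = -U) := by
  rw [slz_comm_iff] at hc
  obtain ⟨c1, c2, c3⟩ := hc
  have dU := slz_det U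
  have dV := slz_det V
  rw [slz_tz_mul] at hUV
  have key : V.1 0 0 = U.1 0 0 → V.1 0 1 = U.1 0 1 → V.1 1 0 = U.1 1 0 → V.1 1 1 = U.1 1 1 →
      V = U := slz_ext
  have key' : V.1 0 0 = - U.1 0 0 → V.1 0 1 = - U.1 0 1 → V.1 1 0 = - U.1 1 0 →
      V.1 1 1 = - U.1 1 1 → V = -U := by
    intro h1 h2 h3 h4
    apply slz_ext <;> simp [h1, h2, h3, h4]
  unfold tz at *
  generalize U.1 0 0 = a at *
  generalize U.1 0 1 = b at *
  generalize U.1 1 0 = c at *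
  generalize U.1 1 1 = d at *
  generalize V.1 0 0 = e at *
  generalize V.1 0 1 = f at *
  generalize V.1 1 0 = g at *
  generalize V.1 1 1 = h at *
  obtain ⟨x, hx⟩ : ∃ x, x = a + d := ⟨_, rfl⟩
  obtain ⟨y, hy⟩ : ∃ x, x = e + h := ⟨_, rfl⟩
  obtain ⟨z, hz⟩ : ∃ x, x = a * e + b * g + c * f + d * h := ⟨_, rfl⟩
  rw [← hx] at hU ⊢
  rw [← hy] at hV
  rw [← hz] at hUV
  have hD : 4 - x ^ 2 = - (a - d) ^ 2 - 4 * b * c := by rw [hx]; linear_combination (-4) * dU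
  have hD' : 4 - y ^ 2 = - (e - h) ^ 2 - 4 * f * g := by rw [hy]; linear_combination (-4) * dV
  have hN : 2 * z - x * y = (a - d) * (e - h) + 2 * b * g + 2 * c * f := by
    rw [hx, hy, hz]; ring
  have h1 : (2 * z - x * y) ^ 2 - (4 - x ^ 2) * (4 - y ^ 2) = 0 := by
    rw [hN, hD, hD']; grind
  -- proportionality of the traceless parts
  have e1 : (2 * z - x * y) * (a - d) = - (4 - x ^ 2) * (e - h) := by
    rw [hN, hD]; grind
  have e2 : (2 * z - x * y) * b = - (4 - x ^ 2) * f := by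
    rw [hN, hD]; grind
  have e3 : (2 * z - x * y) * c = - (4 - x ^ 2) * g := by
    rw [hN, hD]; grind
  clear hD hD' hN c1 c2 c3 dU dV
  rcases abs_le_one_cases hU with hh | hh | hh <;> rcases abs_le_one_cases hV with h' | h' | h' <;>
    rcases abs_le_one_cases hUV with h'' | h'' | h'' <;> rw [hh, h', h''] at h1 <;>
    norm_num at h1 <;> rw [hh, h', h''] at e1 e2 e3 <;> norm_num [hh] <;>
    first
    | (left; apply key <;> linarith)
    | (right; apply key' <;> linarith)

lemma slz_comm_eq_or_inv' {U V : SLZ} (hU : 4 - tz U ^ 2 ≠ 0) (hUV : tz V = tz U)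
    (hc : Commute U V) : V = U ∨ V = U⁻¹ := by
  rw [slz_comm_iff] at hc
  obtain ⟨c1, c2, c3⟩ := hc
  have dU := slz_det U
  have dV := slz_det V
  have key : V.1 0 0 = U.1 0 0 → V.1 0 1 = U.1 0 1 → V.1 1 0 = U.1 1 0 → V.1 1 1 = U.1 1 1 →
      V = U := slz_ext
  have key' : V.1 0 0 = U.1 1 1 → V.1 0 1 = - U.1 0 1 → V.1 1 0 = - U.1 1 0 →
      V.1 1 1 = U.1 0 0 → V = U⁻¹ := by
    intro h1 h2 h3 h4
    obtain ⟨i1, i2, i3, i4⟩ := slz_inv U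
    apply slz_ext
    · rw [i1, h1]
    · rw [i2, h2]
    · rw [i3, h3]
    · rw [i4, h4]
  unfold tz at *
  generalize U.1 0 0 = a at *
  generalize U.1 0 1 = b at *
  generalize U.1 1 0 = c at *
  generalize U.1 1 1 = d at *
  generalize V.1 0 0 = e at *
  generalize V.1 0 1 = f at *
  generalize V.1 1 0 = g at *
  generalize V.1 1 1 = h at *
  obtain ⟨x, hx⟩ : ∃ x, x = a + d := ⟨_, rfl⟩
  have hy : x = e + h := by rw [hx, hUV]
  obtain ⟨N, hN⟩ : ∃ N, N = (a - d) * (e - h) + 2 * b * g + 2 * c * f := ⟨_, rfl⟩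
  rw [← hx] at hU
  have hD : 4 - x ^ 2 = - (a - d) ^ 2 - 4 * b * c := by rw [hx]; linear_combination (-4) * dU
  have hD' : 4 - x ^ 2 = - (e - h) ^ 2 - 4 * f * g := by rw [hy]; linear_combination (-4) * dV
  have h1 : (N - (4 - x ^ 2)) * (N + (4 - x ^ 2)) = 0 := by
    have : N ^ 2 - (4 - x ^ 2) * (4 - x ^ 2) = 0 := by
      nth_rewrite 1 [hD]
      rw [hD', hN]; grind
    linarith
  have e1 : N * (a - d) = - (4 - x ^ 2) * (e - h) := by
    rw [hN, hD]; grind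
  have e2 : N * b = - (4 - x ^ 2) * f := by
    rw [hN, hD]; grind
  have e3 : N * c = - (4 - x ^ 2) * g := by
    rw [hN, hD]; grind
  have hpos := hU
  rcases mul_eq_zero.mp h1 with hh | hh
  · right
    have hn : N = 4 - x ^ 2 := by linarith
    rw [hn] at e1 e2 e3
    have f1 : a - d = - (e - h) := mul_left_cancel₀ hpos (by linarith)
    have f2 : b = - f := mul_left_cancel₀ hpos (by linarith)
    have f3 : c = - g := mul_left_cancel₀ hpos (by linarith)
    apply key' <;> linarith
  · left
    have hn : N = - (4 - x ^ 2) := by linarith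
    rw [hn] at e1 e2 e3
    have f1 : a - d = (e - h) := mul_left_cancel₀ hpos (by linarith)
    have f2 : b = f := mul_left_cancel₀ hpos (by linarith)
    have f3 : c = g := mul_left_cancel₀ hpos (by linarith)
    apply key <;> linarith

lemma slz_comm_eq_or_inv {U V : SLZ} (hU : |tz U| ≤ 1) (hUV : tz V = tz U)
    (hc : Commute U V) : V = U ∨ V = U⁻¹ := by
  apply slz_comm_eq_or_inv' _ hUV hc
  rcases abs_le_one_cases hU with h | h | h <;> rw [h] <;> norm_num

lemma slz_invert {U P : SLZ} (hP : ¬ scz P) (e : U⁻¹ * P * U = P⁻¹) : tz U = 0 := by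
  by_contra hU0
  have e' : P * U = U * P⁻¹ := by rw [← e]; group
  obtain ⟨h1, h2, h3, h4⟩ := slz_mul P U
  obtain ⟨k1, k2, k3, k4⟩ := slz_mul U P⁻¹
  obtain ⟨i1, i2, i3, i4⟩ := slz_inv P
  rw [e', k1, i1, i3] at h1
  rw [e', k2, i2, i4] at h2
  rw [e', k3, i1, i3] at h3
  rw [e', k4, i2, i4] at h4
  unfold tz at hU0
  apply hP
  refine ⟨?_, ?_, ?_⟩
  · apply (mul_eq_zero.mp (?_ : (U.1 0 0 + U.1 1 1) * P.1 0 1 = 0)).resolve_left hU0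
    linarith
  · apply (mul_eq_zero.mp (?_ : (U.1 0 0 + U.1 1 1) * P.1 1 0 = 0)).resolve_left hU0
    linarith
  · have := (mul_eq_zero.mp (?_ : (U.1 0 0 + U.1 1 1) * (P.1 0 0 - P.1 1 1) = 0)).resolve_left hU0
    · linarith
    · linarith

lemma slz_not_ell_of_scz {A : SLZ} (h : scz A) : ¬ |tz A| ≤ 1 := by
  rw [slz_scalar_tz h]; norm_num

/-- An element of order three normalizing an elliptic centralizer commutes. -/
lemma slz_normalize {U P : SLZ} (hU : |tz U| = 1) (hP : |tz P| ≤ 1)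
    (h : Commute P (U⁻¹ * P * U)) : Commute P U := by
  rcases slz_comm_eq_or_inv hP (slz_tz_conj P U) h with e | e
  · have : P * U = U * P := by
      nth_rewrite 2 [← e]; group
    exact this
  · exfalso
    have h0 := slz_invert (fun hs => slz_not_ell_of_scz hs hP) e
    rw [h0] at hU
    simp at hU

lemma slz_sum {U A C : SLZ} (hU : |tz U| = 1) (hA : tz (U * A) = 0) (hC : tz (U * C) = 0) :
    tz (A * C) + tz (A * (U⁻¹ * C * U)) + tz (A * (U * C * U⁻¹)) = tz A * tz C := by
  have hU2 : tz U ^ 2 = 1 := by rw [← sq_abs, hU]; norm_num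
  have dU := slz_det U
  obtain ⟨h1, h2, h3, h4⟩ := slz_mul (U⁻¹ * C) U
  obtain ⟨k1, k2, k3, k4⟩ := slz_mul U⁻¹ C
  obtain ⟨l1, l2, l3, l4⟩ := slz_mul (U * C) U⁻¹
  obtain ⟨m1, m2, m3, m4⟩ := slz_mul U C
  obtain ⟨i1, i2, i3, i4⟩ := slz_inv U
  rw [slz_tz_mul] at hA hC
  rw [slz_tz_mul, slz_tz_mul, slz_tz_mul, h1, h2, h3, h4, l1, l2, l3, l4, k1, k2, k3, k4,
    m1, m2, m3, m4, i1, i2, i3, i4]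
  unfold tz at *
  generalize U.1 0 0 = a at *
  generalize U.1 0 1 = b at *
  generalize U.1 1 0 = c at *
  generalize U.1 1 1 = d at *
  generalize C.1 0 0 = e at *
  generalize C.1 0 1 = f at *
  generalize C.1 1 0 = g at *
  generalize C.1 1 1 = h at *
  clear h1 h2 h3 h4 k1 k2 k3 k4 l1 l2 l3 l4 m1 m2 m3 m4 i1 i2 i3 i4
  have s1 : e + (d * e - b * g) * a + (d * f - b * h) * c + ((a * e + b * g) * d - (a * f + b * h) * c)
    = (a + d) * (e + h) * a + (e + h) := by grind
  have s2 : f + (d * e - b * g) * b + (d * f - b * h) * d + (-(a * e + b * g) * b + (a * f + b * h) * a)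
    = (a + d) * (e + h) * b := by grind
  have s3 : g + (-c * e + a * g) * a + (-c * f + a * h) * c + ((c * e + d * g) * d - (c * f + d * h) * c)
    = (a + d) * (e + h) * c := by grind
  have s4 : h + (-c * e + a * g) * b + (-c * f + a * h) * d + (-(c * e + d * g) * b + (c * f + d * h) * a)
    = (a + d) * (e + h) * d + (e + h) := by grind
  linear_combination (A.1 0 0) * s1 + A.1 1 0 * s2 + A.1 0 1 * s3 + A.1 1 1 * s4
    + (a + d) * (e + h) * hA

lemma slz_comm_same {U A C : SLZ} (hU : |tz U| = 1) (hA : tz (U * A) = 0) (hC : tz (U * C) = 0)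
    (hAC : Commute A C) : scz (A⁻¹ * C) := by
  have hU0 : tz U ≠ 0 := by intro h0; rw [h0] at hU; simp at hU
  rw [slz_comm_iff] at hAC
  obtain ⟨c1, c2, c3⟩ := hAC
  obtain ⟨k1, k2, k3, k4⟩ := slz_mul A⁻¹ C
  obtain ⟨i1, i2, i3, i4⟩ := slz_inv A
  rw [slz_tz_mul] at hA hC
  unfold scz
  rw [k1, k2, k3, k4, i1, i2, i3, i4]
  unfold tz at *
  have dA := slz_det A
  have dC := slz_det C
  generalize U.1 0 0 = p at *
  generalize U.1 0 1 = q at *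
  generalize U.1 1 0 = r at *
  generalize U.1 1 1 = s at *
  generalize A.1 0 0 = a at *
  generalize A.1 0 1 = b at *
  generalize A.1 1 0 = c at *
  generalize A.1 1 1 = d at *
  generalize C.1 0 0 = e at *
  generalize C.1 0 1 = f at *
  generalize C.1 1 0 = g at *
  generalize C.1 1 1 = h at *
  have x1 : (p + s) * (d * f - b * h) = 0 := by grind
  have x2 : (p + s) * (a * g - c * e) = 0 := by grind
  have x3 : (p + s) * (e * d - a * h) = 0 := by grind
  have y1 := (mul_eq_zero.mp x1).resolve_left hU0
  have y2 := (mul_eq_zero.mp x2).resolve_left hU0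
  have y3 := (mul_eq_zero.mp x3).resolve_left hU0
  refine ⟨by linarith, by linarith, by linarith⟩

lemma slz_comm_of_scz {A : SLZ} (h : scz A) (B : SLZ) : Commute B A := by
  rw [slz_comm_iff]
  obtain ⟨h1, h2, h3⟩ := h
  rw [h1, h2, h3]
  simp

/-- Normalizing a centralizer without commuting forces order two. -/
lemma slz_dihedral {B C : SLZ} (h : Commute C (B⁻¹ * C * B)) (hBC : ¬ Commute B C)
    (hell : |tz (B * C)| ≤ 1) : tz B = 0 := by
  have hne : B⁻¹ * C * B ≠ C := by
    intro e
    apply hBC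
    have : B * C = C * B := by nth_rewrite 1 [← e]; group
    exact this
  have hs : ¬ scz C := fun hs => hBC (slz_comm_of_scz hs B)
  by_cases hy : 4 - tz C ^ 2 = 0
  · exfalso
    apply hBC
    have htr := slz_tz_conj C B
    have hz : tz (B * (B⁻¹ * C * B)) = tz (B * C) := by
      have : B * (B⁻¹ * C * B) = C * B := by group
      rw [this, slz_tz_mul, slz_tz_mul]; ring
    have h2z : 2 * tz (B * C) - tz B * tz C = 0 := by
      by_contra ht
      apply hne
      rw [slz_comm_iff] at h
      generalize B⁻¹ * C * B = D at *
      obtain ⟨c1, c2, c3⟩ := h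
      rw [slz_tz_mul, slz_tz_mul] at hz
      rw [slz_tz_mul] at ht
      unfold tz at *
      have f1 : D.1 0 1 = C.1 0 1 := mul_left_cancel₀ ht (by grind)
      have f2 : D.1 1 0 = C.1 1 0 := mul_left_cancel₀ ht (by grind)
      have f3 : D.1 0 0 - D.1 1 1 = C.1 0 0 - C.1 1 1 := mul_left_cancel₀ ht (by grind)
      apply slz_ext <;> linarith
    have hx : |tz B| ≤ 1 := by
      have : (tz C - 2) * (tz C + 2) = 0 := by linarith
      rcases mul_eq_zero.mp this with e | e
      · have e' : tz C = 2 := by linarith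
        rw [e'] at h2z
        have : tz B = tz (B * C) := by linarith
        rwa [this]
      · have e' : tz C = -2 := by linarith
        rw [e'] at h2z
        have : tz B = - tz (B * C) := by linarith
        rwa [this, abs_neg]
    apply slz_ell_comm_aux hx
    rw [h2z, hy]; norm_num
  · rcases slz_comm_eq_or_inv' hy (slz_tz_conj C B) h with e | e
    · exact absurd e hne
    · exact slz_invert hs e

/-! ### The braid group on three strands -/

/-- The braid group on three strands. -/
abbrev B3 := BraidGroup 3

/-- First generator. -/
def sg1 : B3 := PresentedGroup.of (rels := braidRels 3) (0 : Fin 2)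
/-- Second generator. -/
def sg2 : B3 := PresentedGroup.of (rels := braidRels 3) (1 : Fin 2)

/-- Homomorphisms out of the braid group from a pair satisfying the braid relation. -/
def b3Lift {H : Type*} [Group H] (x y : H) (h : x * y * x = y * x * y) : B3 →* H :=
  PresentedGroup.toGroup (rels := braidRels 3) (f := ![x, y]) (by
    rintro r (⟨i, j, hij, rfl⟩ | ⟨i, j, hij, rfl⟩)
    · exfalso
      have := i.isLt; have := j.isLt
      omega
    · have hi := i.isLt
      have hj := j.isLt
      have : (i = (0 : Fin 2) ∧ j = (1 : Fin 2)) ∨ (i = (1 : Fin 2) ∧ j = (0 : Fin 2)) := by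
        rcases hij with hij | hij
        · left; constructor <;> apply Fin.ext <;> simp <;> omega
        · right; constructor <;> apply Fin.ext <;> simp <;> omega
      rcases this with ⟨rfl, rfl⟩ | ⟨rfl, rfl⟩
      · simp only [map_mul, map_inv, FreeGroup.lift_apply_of]
        simp [h]
      · simp only [map_mul, map_inv, FreeGroup.lift_apply_of]
        simp [h])

lemma b3Lift_1 {H : Type*} [Group H] (x y : H) (h : x * y * x = y * x * y) :
    b3Lift x y h sg1 = x := by
  simp [b3Lift, sg1]

lemma b3Lift_2 {H : Type*} [Group H] (x y : H) (h : x * y * x = y * x * y) :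
    b3Lift x y h sg2 = y := by
  simp [b3Lift, sg2]

lemma sg_rel : sg1 * sg2 * sg1 = sg2 * sg1 * sg2 := by
  have h : FreeGroup.of (0 : Fin 2) * FreeGroup.of 1 * FreeGroup.of 0 *
      (FreeGroup.of 1 * FreeGroup.of 0 * FreeGroup.of 1)⁻¹ ∈ braidRels 3 := by
    right
    exact ⟨(0 : Fin 2), (1 : Fin 2), Or.inl rfl, rfl⟩
  have h2 := PresentedGroup.one_of_mem h
  rw [map_mul, map_inv, mul_inv_eq_one] at h2
  simp only [map_mul] at h2
  exact h2

lemma b3_induction {p : B3 → Prop} (h1 : p 1) (ha : ∀ g, p g → p (sg1 * g))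
    (hb : ∀ g, p g → p (sg2 * g)) (hai : ∀ g, p g → p (sg1⁻¹ * g))
    (hbi : ∀ g, p g → p (sg2⁻¹ * g)) (g : B3) : p g := by
  have hg : g ∈ Subgroup.closure (Set.range (PresentedGroup.of (rels := braidRels 3))) := by
    rw [PresentedGroup.closure_range_of]; trivial
  induction hg using Subgroup.closure_induction_left with
  | one => exact h1
  | mul_left x hx y _ ih =>
    obtain ⟨i, rfl⟩ := hx
    have : i = (0 : Fin 2) ∨ i = (1 : Fin 2) := by
      have := i.isLt
      rcases i with ⟨_ | _ | n, hn⟩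
      · left; rfl
      · right; rfl
      · omega
    rcases this with rfl | rfl
    · exact ha _ ih
    · exact hb _ ih
  | inv_mul_cancel x hx y _ ih =>
    obtain ⟨i, rfl⟩ := hx
    have : i = (0 : Fin 2) ∨ i = (1 : Fin 2) := by
      have := i.isLt
      rcases i with ⟨_ | _ | n, hn⟩
      · left; rfl
      · right; rfl
      · omega
    rcases this with rfl | rfl
    · exact hai _ ih
    · exact hbi _ ih

/-- Image of the first generator. -/
def m1 : SLZ := ⟨!![1, 1; 0, 1], by simp [Matrix.det_fin_two]⟩
/-- Image of the second generator. -/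
def m2 : SLZ := ⟨!![1, 0; -1, 1], by simp [Matrix.det_fin_two]⟩

lemma m_rel : m1 * m2 * m1 = m2 * m1 * m2 := by decide

/-- The standard representation. -/
def rho : B3 →* SLZ := b3Lift m1 m2 m_rel

lemma rho_1 : rho sg1 = m1 := b3Lift_1 _ _ _
lemma rho_2 : rho sg2 = m2 := b3Lift_2 _ _ _

/-- The half twist. -/
def bx : B3 := sg1 * sg2 * sg1
/-- The element of order three modulo the centre. -/
def byb : B3 := sg1 * sg2

lemma bx_sq : bx * bx = byb * byb * byb := by
  unfold bx byb
  calc sg1 * sg2 * sg1 * (sg1 * sg2 * sg1) = sg1 * sg2 * sg1 * (sg2 * sg1 * sg2) := by rw [sg_rel]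
    _ = _ := by group

/-- The full twist. -/
def bz : B3 := bx * bx

lemma bz_comm1 : sg1 * bz = bz * sg1 := by
  have e : sg1 = byb⁻¹ * bx := by unfold bx byb; group
  have e1 : bx * bz = bz * bx := by unfold bz; group
  have e2 : byb * bz = bz * byb := by unfold bz; rw [bx_sq]; group
  have e3 : byb⁻¹ * bz = bz * byb⁻¹ := by
    rw [inv_mul_eq_iff_eq_mul, ← mul_assoc, e2, mul_assoc, mul_inv_cancel, mul_one]
  rw [e, mul_assoc, e1, ← mul_assoc, e3, mul_assoc]

lemma bz_comm2 : sg2 * bz = bz * sg2 := by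
  have e : sg2 = sg1⁻¹ * byb := by unfold byb; group
  have e2 : byb * bz = bz * byb := by unfold bz; rw [bx_sq]; group
  have e3 : sg1⁻¹ * bz = bz * sg1⁻¹ := by
    rw [inv_mul_eq_iff_eq_mul, ← mul_assoc, bz_comm1, mul_assoc, mul_inv_cancel, mul_one]
  rw [e, mul_assoc, e2, ← mul_assoc, e3, mul_assoc]

lemma bz_comm (g : B3) : Commute g bz := by
  induction g using b3_induction with
  | h1 => exact Commute.one_left _
  | ha g ih => exact Commute.mul_left bz_comm1 ih
  | hb g ih => exact Commute.mul_left bz_comm2 ih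
  | hai g ih => exact Commute.mul_left (Commute.inv_left bz_comm1) ih
  | hbi g ih => exact Commute.mul_left (Commute.inv_left bz_comm2) ih

/-- Products of `bx * byb` and `bx * byb * byb`. -/
inductive NF : B3 → Prop
  | one : NF 1
  | one1 (w : B3) : NF w → NF (bx * byb * w)
  | one2 (w : B3) : NF w → NF (bx * byb * byb * w)

/-- Normal form predicate. -/
def HasNF (g : B3) : Prop :=
  ∃ (k : ℤ) (p q w : B3), NF w ∧ (p = 1 ∨ p = byb ∨ p = byb * byb) ∧ (q = 1 ∨ q = bx) ∧
    g = bz ^ k * (p * w * q)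

lemma bzk_comm (g : B3) (k : ℤ) : g * bz ^ k = bz ^ k * g := (bz_comm g).zpow_right k

lemma hasNF_z (g : B3) (h : HasNF g) (n : ℤ) : HasNF (bz ^ n * g) := by
  obtain ⟨k, p, q, w, hw, hp, hq, rfl⟩ := h
  exact ⟨n + k, p, q, w, hw, hp, hq, by rw [zpow_add]; group⟩

lemma hasNF_y (g : B3) (h : HasNF g) : HasNF (byb * g) := by
  obtain ⟨k, p, q, w, hw, hp, hq, rfl⟩ := h
  rw [← mul_assoc, bzk_comm, mul_assoc]
  apply hasNF_z
  rcases hp with rfl | rfl | rfl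
  · exact ⟨0, byb, q, w, hw, by simp, hq, by group⟩
  · exact ⟨0, byb * byb, q, w, hw, by simp, hq, by group⟩
  · have : byb * (byb * byb * w * q) = bz ^ (1 : ℤ) * (1 * w * q) := by
      rw [zpow_one]; unfold bz; rw [bx_sq]; group
    rw [this]
    exact ⟨1, 1, q, w, hw, by simp, hq, rfl⟩

lemma hasNF_x (g : B3) (h : HasNF g) : HasNF (bx * g) := by
  obtain ⟨k, p, q, w, hw, hp, hq, rfl⟩ := h
  rw [← mul_assoc, bzk_comm, mul_assoc]
  apply hasNF_z
  rcases hp with rfl | rfl | rfl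
  · cases hw with
    | one =>
      rcases hq with rfl | rfl
      · exact ⟨0, 1, bx, 1, NF.one, by simp, by simp, by group⟩
      · exact ⟨1, 1, 1, 1, NF.one, by simp, by simp, by simp [bz]⟩
    | one1 w hw =>
      exact ⟨1, byb, q, w, hw, by simp, hq, by rw [zpow_one]; unfold bz; group⟩
    | one2 w hw =>
      exact ⟨1, byb * byb, q, w, hw, by simp, hq, by rw [zpow_one]; unfold bz; group⟩
  · exact ⟨0, 1, q, bx * byb * w, NF.one1 _ hw, by simp, hq, by group⟩
  · exact ⟨0, 1, q, bx * byb * byb * w, NF.one2 _ hw, by simp, hq, by group⟩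

lemma hasNF_xi (g : B3) (h : HasNF g) : HasNF (bx⁻¹ * g) := by
  have : bx⁻¹ * g = bz ^ (-1 : ℤ) * (bx * g) := by unfold bz; group
  rw [this]
  exact hasNF_z _ (hasNF_x _ h) _

lemma hasNF_yi (g : B3) (h : HasNF g) : HasNF (byb⁻¹ * g) := by
  have : byb⁻¹ * g = bz ^ (-1 : ℤ) * (byb * (byb * g)) := by unfold bz; rw [bx_sq]; group
  rw [this]
  exact hasNF_z _ (hasNF_y _ (hasNF_y _ h)) _

lemma hasNF_all (g : B3) : HasNF g := by
  induction g using b3_induction with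
  | h1 => exact ⟨0, 1, 1, 1, NF.one, by simp, by simp, by simp⟩
  | ha g ih =>
    have : sg1 * g = byb⁻¹ * (bx * g) := by unfold bx byb; group
    rw [this]; exact hasNF_yi _ (hasNF_x _ ih)
  | hb g ih =>
    have : sg2 * g = bx⁻¹ * (byb * (byb * g)) := by
      have : sg2 = bx⁻¹ * (byb * byb) := by
        unfold bx byb
        rw [eq_inv_mul_iff_mul_eq]
        group
      rw [this]; group
    rw [this]; exact hasNF_xi _ (hasNF_y _ (hasNF_y _ ih))
  | hai g ih =>
    have : sg1⁻¹ * g = bx⁻¹ * (byb * g) := by unfold bx byb; group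
    rw [this]; exact hasNF_xi _ (hasNF_y _ ih)
  | hbi g ih =>
    have : sg2⁻¹ * g = byb⁻¹ * (byb⁻¹ * (bx * g)) := by
      have : sg2⁻¹ = byb⁻¹ * byb⁻¹ * bx := by
        unfold bx byb
        group
      rw [this]; group
    rw [this]; exact hasNF_yi _ (hasNF_yi _ (hasNF_x _ ih))

lemma rho_x : rho bx = ⟨!![0, 1; -1, 0], by simp [Matrix.det_fin_two]⟩ := by
  unfold bx; rw [map_mul, map_mul, rho_1, rho_2]; exact Subtype.ext (by decide)

lemma rho_y : rho byb = ⟨!![0, 1; -1, 1], by simp [Matrix.det_fin_two]⟩ := by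
  unfold byb; rw [map_mul, rho_1, rho_2]; exact Subtype.ext (by decide)

/-- Sign pattern of alternating words. -/
lemma nf_sign {w : B3} (h : NF w) : ∃ e : ℤ, (e = 1 ∨ e = -1) ∧
    0 < e * (rho w).1 0 0 ∧ 0 < e * (rho w).1 1 1 ∧ e * (rho w).1 0 1 ≤ 0 ∧ e * (rho w).1 1 0 ≤ 0 ∧
    (w = 1 ∨ e * (rho w).1 0 1 < 0 ∨ e * (rho w).1 1 0 < 0) := by
  induction h with
  | one => exact ⟨1, by simp⟩
  | one1 w hw ih =>
    obtain ⟨e, he, h1, h2, h3, h4, h5⟩ := ih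
    refine ⟨-e, by omega, ?_⟩
    have hh : rho (bx * byb) = ⟨!![-1, 1; 0, -1], by simp [Matrix.det_fin_two]⟩ := by
      rw [map_mul, rho_x, rho_y]; exact Subtype.ext (by decide)
    obtain ⟨k1, k2, k3, k4⟩ := slz_mul (rho (bx * byb)) (rho w)
    rw [map_mul rho (bx * byb) w, k1, k2, k3, k4, hh]
    simp
    refine ⟨by linarith, by linarith, by linarith, by linarith, Or.inr (Or.inl (by linarith))⟩
  | one2 w hw ih =>
    obtain ⟨e, he, h1, h2, h3, h4, h5⟩ := ih
    refine ⟨-e, by omega, ?_⟩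
    have hh : rho (bx * byb * byb) = ⟨!![-1, 0; 1, -1], by simp [Matrix.det_fin_two]⟩ := by
      rw [map_mul, map_mul, rho_x, rho_y]; exact Subtype.ext (by decide)
    obtain ⟨k1, k2, k3, k4⟩ := slz_mul (rho (bx * byb * byb)) (rho w)
    rw [map_mul rho (bx * byb * byb) w, k1, k2, k3, k4, hh]
    simp
    refine ⟨by linarith, by linarith, by linarith, by linarith, Or.inr (Or.inr (by linarith))⟩

lemma rho_z : rho bz = -1 := by
  unfold bz; rw [map_mul, rho_x]; exact Subtype.ext (by decide)

lemma scz_mul {A B : SLZ} (hA : scz A) (hB : scz B) : scz (A * B) := by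
  rw [slz_scz_iff] at *
  rcases hA with rfl | rfl <;> rcases hB with rfl | rfl <;> simp

lemma scz_inv {A : SLZ} (hA : scz A) : scz A⁻¹ := by
  rw [slz_scz_iff] at *
  rcases hA with rfl | rfl
  · simp
  · right; rw [inv_eq_iff_mul_eq_one]; simp

lemma scz_rho_zpow (k : ℤ) : scz (rho (bz ^ k)) := by
  induction k using Int.induction_on with
  | zero => simp [scz]
  | succ n ih => rw [zpow_add_one, map_mul]; exact scz_mul ih ((slz_scz_iff _).mpr (Or.inr rho_z))
  | pred n ih =>
    rw [zpow_sub_one, map_mul, map_inv]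
    exact scz_mul ih (scz_inv ((slz_scz_iff _).mpr (Or.inr rho_z)))

lemma rho_kernel {g : B3} (h : scz (rho g)) : ∃ k : ℤ, g = bz ^ k := by
  obtain ⟨k, p, q, w, hw, hp, hq, rfl⟩ := hasNF_all g
  have h' : scz (rho (p * w * q)) := by
    have : p * w * q = (bz ^ k)⁻¹ * (bz ^ k * (p * w * q)) := by group
    rw [this, map_mul, map_inv]
    exact scz_mul (scz_inv (scz_rho_zpow k)) h
  obtain ⟨e, he, h1, h2, h3, h4, h5⟩ := nf_sign hw
  obtain ⟨a1, a2, a3, a4⟩ := slz_mul (rho p) (rho w)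
  obtain ⟨b1, b2, b3, b4⟩ := slz_mul (rho p * rho w) (rho q)
  have hyy : rho (byb * byb) = ⟨!![-1, 1; -1, 0], by simp [Matrix.det_fin_two]⟩ := by
    rw [map_mul, rho_y]; exact Subtype.ext (by decide)
  rw [map_mul, map_mul] at h'
  obtain ⟨c1, c2, c3⟩ := h'
  rw [b2, a1, a2] at c1
  rw [b3, a3, a4] at c2
  rw [b1, b4, a1, a2, a3, a4] at c3
  refine ⟨k, ?_⟩
  suffices hs : p = 1 ∧ q = 1 ∧ w = 1 by
    obtain ⟨rfl, rfl, rfl⟩ := hs; simp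
  rcases hp with rfl | rfl | rfl <;> rcases hq with rfl | rfl <;>
    simp only [rho_x, rho_y, hyy, map_one] at c1 c2 c3 <;> simp at c1 c2 c3 <;>
    rcases he with rfl | rfl <;> simp [c1, c2] at h3 h4 h5 <;>
    first
    | exact ⟨rfl, rfl, h5⟩
    | (exfalso; linarith)

lemma expSum_1 : expSumHom sg1 = Multiplicative.ofAdd 1 := by
  simp [expSumHom, sg1]
lemma expSum_2 : expSumHom sg2 = Multiplicative.ofAdd 1 := by
  simp [expSumHom, sg2]
lemma expSum_z : expSumHom bz = Multiplicative.ofAdd 6 := by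
  simp only [bz, bx, map_mul, expSum_1, expSum_2]; rfl

lemma expSum_zpow {k : ℤ} (h : expSumHom (bz ^ k) = 1) : k = 0 := by
  rw [map_zpow, expSum_z, ← ofAdd_zsmul] at h
  have : k • (6 : ℤ) = 0 := h
  simpa using this

lemma b3_faithful {g h : B3} (h1 : rho g = rho h) (h2 : expSumHom g = expSumHom h) : g = h := by
  have : scz (rho (g * h⁻¹)) := by rw [map_mul, map_inv, h1, mul_inv_cancel]; simp [scz]
  obtain ⟨k, hk⟩ := rho_kernel this
  have : k = 0 := by
    apply expSum_zpow
    rw [← hk, map_mul, map_inv, h2, mul_inv_cancel]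
  rw [this, zpow_zero] at hk
  exact mul_inv_eq_one.mp hk

lemma b3_comm_iff (g h : B3) : Commute g h ↔ Commute (rho g) (rho h) := by
  constructor
  · intro hc; exact hc.map rho
  · intro hc
    apply b3_faithful
    · rw [map_mul, map_mul]; exact hc
    · rw [map_mul, map_mul, mul_comm]

lemma cen_comm {z : B3} (h : scz (rho z)) (g : B3) : Commute g z := by
  rw [b3_comm_iff]; exact slz_comm_of_scz h _

lemma cen_iff {z : B3} : scz (rho z) ↔ z ∈ Subgroup.center B3 := by
  constructor
  · intro h
    rw [Subgroup.mem_center_iff]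
    intro g; exact cen_comm h g
  · intro h
    rw [Subgroup.mem_center_iff] at h
    have h1 := (slz_comm_iff _ _).mp ((b3_comm_iff sg1 z).mp (h sg1))
    have h2 := (slz_comm_iff _ _).mp ((b3_comm_iff sg2 z).mp (h sg2))
    rw [rho_1] at h1
    rw [rho_2] at h2
    simp [m1] at h1
    simp [m2] at h2
    exact ⟨by linarith [h2.1], by linarith [h1.1], by linarith [h1.2]⟩

/-- Trace of a braid. -/
def tb (g : B3) : ℤ := tz (rho g)
/-- Elliptic braids. -/
def ell (g : B3) : Prop := |tb g| ≤ 1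
/-- Central braids. -/
def cen (g : B3) : Prop := scz (rho g)

lemma cen.comm {z : B3} (h : cen z) (g : B3) : Commute g z := cen_comm h g
lemma cen.mul {a b : B3} (ha : cen a) (hb : cen b) : cen (a * b) := by
  unfold cen at *; rw [map_mul]; exact scz_mul ha hb
lemma cen.inv {a : B3} (ha : cen a) : cen a⁻¹ := by
  unfold cen at *; rw [map_inv]; exact scz_inv ha
lemma cen_conj {a g : B3} (ha : cen (g⁻¹ * a * g)) : cen a := by
  have e : a = g * (g⁻¹ * a * g) * g⁻¹ := by group
  have := (ha.comm g).eq
  rw [this] at e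
  rw [e]; simpa using ha

lemma b3_comm_trans {a b c : B3} (hb : ¬ cen b) (h1 : Commute a b) (h2 : Commute b c) :
    Commute a c := by
  rw [b3_comm_iff] at *
  exact slz_comm_trans hb h1 h2

lemma tb_conj (a g : B3) : tb (g⁻¹ * a * g) = tb a := by
  unfold tb; rw [map_mul, map_mul, map_inv]; exact slz_tz_conj _ _

lemma tb_mul_comm (a b : B3) : tb (a * b) = tb (b * a) := by
  rw [← tb_conj (a * b) a]; congr 1; group

lemma tb_inv (a : B3) : tb a⁻¹ = tb a := by
  unfold tb; rw [map_inv]; exact slz_tz_inv _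

lemma abs_tb_cen (a : B3) {z : B3} (hz : cen z) : |tb (a * z)| = |tb a| := by
  unfold tb; rw [map_mul]
  rcases (slz_scz_iff _).mp hz with h | h
  · rw [h, mul_one]
  · rw [h, mul_neg, mul_one]
    have : tz (- rho a) = - tz (rho a) := by simp [tz]; ring
    rw [this, abs_neg]

lemma ell_not_cen {a : B3} (h : ell a) : ¬ cen a := fun hs => slz_not_ell_of_scz hs h

lemma ell_mul_cen {a z : B3} (hz : cen z) : ell (a * z) ↔ ell a := by
  unfold ell; rw [abs_tb_cen a hz]

lemma ell_comm {a b : B3} (ha : ell a) (hb : ell b) (hab : ell (a * b) ∨ cen (a * b)) :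
    Commute a b := by
  rcases hab with hab | hab
  · rw [b3_comm_iff]
    unfold ell tb at hab
    rw [map_mul] at hab
    exact slz_ell_comm ha hb hab
  · have := hab.comm a
    have h2 : a * (a * b) = a * (b * a) := by rw [this.eq]; group
    exact mul_left_cancel h2

lemma ell_pow_comm {m a : B3} (hm : ¬ ell m) (n : ℕ) (h : Commute (m ^ (n + 1)) a) :
    Commute m a := by
  rw [b3_comm_iff] at *
  rw [map_pow] at h
  exact slz_pow_comm hm n h

lemma ell_eq {u v : B3} (hu : ell u) (hv : ell v) (huv : ell (u * v)) (hc : Commute u v) :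
    |tb u| = 1 ∧ cen (u⁻¹ * v) := by
  unfold ell tb at *
  rw [map_mul] at huv
  rw [b3_comm_iff] at hc
  obtain ⟨h1, h2⟩ := slz_ell_eq hu hv huv hc
  refine ⟨h1, ?_⟩
  unfold cen
  rw [map_mul, map_inv, slz_scz_iff]
  rcases h2 with h2 | h2 <;> rw [h2]
  · left; simp
  · right; simp

lemma b3_normalize {u p : B3} (hu : |tb u| = 1) (hp : ell p) (h : Commute p (u⁻¹ * p * u)) :
    Commute p u := by
  rw [b3_comm_iff] at *
  rw [map_mul, map_mul, map_inv] at h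
  exact slz_normalize hu hp h

lemma b3_sum {u a c : B3} (hU : |tb u| = 1) (hA : tb (u * a) = 0) (hC : tb (u * c) = 0) :
    tb (a * c) + tb (a * (u⁻¹ * c * u)) + tb (a * (u * c * u⁻¹)) = tb a * tb c := by
  unfold tb at *
  simp only [map_mul, map_inv] at *
  exact slz_sum hU hA hC

lemma b3_comm_same {u a c : B3} (hU : |tb u| = 1) (hA : tb (u * a) = 0) (hC : tb (u * c) = 0)
    (hAC : Commute a c) : cen (a⁻¹ * c) := by
  rw [b3_comm_iff] at hAC
  unfold tb cen at *
  simp only [map_mul, map_inv] at *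
  exact slz_comm_same hU hA hC hAC

lemma b3_dihedral {b c : B3} (h : Commute c (b⁻¹ * c * b)) (hBC : ¬ Commute b c)
    (hell : ell (b * c)) : cen (b ^ 2) := by
  rw [b3_comm_iff] at hBC h
  unfold ell tb cen at *
  simp only [map_mul, map_inv, map_pow] at *
  exact slz_sq (slz_dihedral h hBC hell)

lemma cen_sq {a : B3} (h : tb a = 0) : cen (a ^ 2) := by
  unfold cen; rw [map_pow]; exact slz_sq h

lemma cen_cube {a : B3} (h : |tb a| = 1) : cen (a ^ 3) := by
  unfold cen; rw [map_pow]; exact slz_cube h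

/-! ### Hurwitz orbits -/

lemma hurwitzAct_mul_of {G : Type*} [Group G] {n : ℕ} (w : FreeGroup (Fin (n - 1)))
    (i : Fin (n - 1)) (s : Fin n → G) :
    hurwitzAct (w * FreeGroup.of i) s = hEquiv i (hurwitzAct w s) := by
  simp [hurwitzAct]

lemma hurwitzAct_mul_of_inv {G : Type*} [Group G] {n : ℕ} (w : FreeGroup (Fin (n - 1)))
    (i : Fin (n - 1)) (s : Fin n → G) :
    hurwitzAct (w * (FreeGroup.of i)⁻¹) s = (hEquiv i).symm (hurwitzAct w s) := by
  simp [hurwitzAct]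

lemma hurwitzAct_one {G : Type*} [Group G] {n : ℕ} (s : Fin n → G) :
    hurwitzAct (1 : FreeGroup (Fin (n - 1))) s = s := by
  simp [hurwitzAct]

lemma hurwitzAct_inv {G : Type*} [Group G] {n : ℕ} (w : FreeGroup (Fin (n - 1)))
    (s : Fin n → G) : hurwitzAct w⁻¹ (hurwitzAct w s) = s := by
  simp [hurwitzAct]

lemma orbit_closed {G : Type*} [Group G] {n : ℕ} {s t : Fin n → G} (ht : t ∈ hurwitzOrbit s)
    (i : Fin (n - 1)) : hEquiv i t ∈ hurwitzOrbit s ∧ (hEquiv i).symm t ∈ hurwitzOrbit s := by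
  obtain ⟨w, rfl⟩ := ht
  exact ⟨⟨_, hurwitzAct_mul_of w i s⟩, ⟨_, hurwitzAct_mul_of_inv w i s⟩⟩

lemma orbit_subset {G : Type*} [Group G] {n : ℕ} {s : Fin n → G} {S : Set (Fin n → G)}
    (hs : s ∈ S) (h1 : ∀ i, ∀ t ∈ S, hEquiv i t ∈ S) (h2 : ∀ i, ∀ t ∈ S, (hEquiv i).symm t ∈ S) :
    hurwitzOrbit s ⊆ S := by
  rintro t ⟨w, rfl⟩
  have hw : w ∈ Subgroup.closure (Set.range (FreeGroup.of (α := Fin (n - 1)))) := by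
    rw [FreeGroup.closure_range_of]; trivial
  induction hw using Subgroup.closure_induction_right with
  | one => rw [hurwitzAct_one]; exact hs
  | mul_right x _ y hy ih =>
    obtain ⟨i, rfl⟩ := hy
    rw [hurwitzAct_mul_of]; exact h1 _ _ ih
  | mul_inv_cancel x _ y hy ih =>
    obtain ⟨i, rfl⟩ := hy
    rw [hurwitzAct_mul_of_inv]; exact h2 _ _ ih

/-- Counting principle: a finite set closed under the elementary moves that meets the orbit
contains the orbit. -/
lemma orbit_card_le {G : Type*} [Group G] {n : ℕ} {s t : Fin n → G} (ht : t ∈ hurwitzOrbit s)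
    {S : Set (Fin n → G)} (hfin : S.Finite) (hs : t ∈ S) (h1 : ∀ i, ∀ t ∈ S, hEquiv i t ∈ S) :
    (hurwitzOrbit s).ncard ≤ S.ncard := by
  have h2 : ∀ i, ∀ t ∈ S, (hEquiv i).symm t ∈ S := by
    intro i t ht
    have hsurj : Set.SurjOn (hEquiv i) S S := by
      have hsub : Set.image (hEquiv i) S ⊆ S := by
        rintro _ ⟨x, hx, rfl⟩; exact h1 i x hx
      have := Set.eq_of_subset_of_ncard_le hsub
        (by rw [Set.ncard_image_of_injective _ (hEquiv i).injective]) hfin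
      exact this.symm.subset
    obtain ⟨t', ht', rfl⟩ := hsurj ht
    simpa using ht'
  have hsub := orbit_subset hs h1 h2
  have hsS : s ∈ S := by
    obtain ⟨w, rfl⟩ := ht
    apply hsub
    exact ⟨w⁻¹, hurwitzAct_inv w s⟩
  exact Set.ncard_le_ncard (orbit_subset hsS h1 h2) hfin

/-! ### Consequences of finiteness of the orbit -/

/-- The tuple `(a, b, c, d)` lies in the Hurwitz orbit of `s`. -/
def R (s : Fin 4 → B3) (a b c d : B3) : Prop := ![a, b, c, d] ∈ hurwitzOrbit s

lemma hE0 (a b c d : B3) : hEquiv (n := 4) (0 : Fin 3) ![a, b, c, d] = ![b, b⁻¹ * a * b, c, d] := by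
  funext k; fin_cases k <;> rfl
lemma hE1 (a b c d : B3) : hEquiv (n := 4) (1 : Fin 3) ![a, b, c, d] = ![a, c, c⁻¹ * b * c, d] := by
  funext k; fin_cases k <;> rfl
lemma hE2 (a b c d : B3) : hEquiv (n := 4) (2 : Fin 3) ![a, b, c, d] = ![a, b, d, d⁻¹ * c * d] := by
  funext k; fin_cases k <;> rfl

lemma R.s1 {s : Fin 4 → B3} {a b c d : B3} (h : R s a b c d) : R s b (b⁻¹ * a * b) c d := by
  have := (orbit_closed h (0 : Fin 3)).1
  rwa [hE0] at this
lemma R.s2 {s : Fin 4 → B3} {a b c d : B3} (h : R s a b c d) : R s a c (c⁻¹ * b * c) d := by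
  have := (orbit_closed h (1 : Fin 3)).1
  rwa [hE1] at this
lemma R.s3 {s : Fin 4 → B3} {a b c d : B3} (h : R s a b c d) : R s a b d (d⁻¹ * c * d) := by
  have := (orbit_closed h (2 : Fin 3)).1
  rwa [hE2] at this
lemma R.i2 {s : Fin 4 → B3} {a b c d : B3} (h : R s a b c d) : R s a (b * c * b⁻¹) b d := by
  have := (orbit_closed h (1 : Fin 3)).2
  have e : (hEquiv (n := 4) (1 : Fin 3)).symm ![a, b, c, d] = ![a, b * c * b⁻¹, b, d] := by
    funext k; fin_cases k <;> rfl
  rwa [e] at this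
lemma R.i3 {s : Fin 4 → B3} {a b c d : B3} (h : R s a b c d) : R s a b (c * d * c⁻¹) c := by
  have := (orbit_closed h (2 : Fin 3)).2
  have e : (hEquiv (n := 4) (2 : Fin 3)).symm ![a, b, c, d] = ![a, b, c * d * c⁻¹, c] := by
    funext k; fin_cases k <;> rfl
  rwa [e] at this

/-- Conjugation. -/
def cj (g x : B3) : B3 := g⁻¹ * x * g

lemma cj_cj (g h x : B3) : cj h (cj g x) = cj (g * h) x := by simp [cj, mul_assoc]
lemma cj_mul (g x y : B3) : cj g x * cj g y = cj g (x * y) := by simp [cj, mul_assoc]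
lemma cj_self (g : B3) : cj g g = g := by simp [cj]
lemma cj_one (g : B3) : cj 1 g = g := by simp [cj]
lemma cj_comm {g x y : B3} : Commute (cj g x) (cj g y) ↔ Commute x y := by
  constructor
  · intro h
    have := h.eq
    rw [cj_mul, cj_mul] at this
    change x * y = y * x
    simpa [cj] using this
  · intro h
    change cj g x * cj g y = cj g y * cj g x
    rw [cj_mul, cj_mul, h.eq]
lemma tb_cj (g x : B3) : tb (cj g x) = tb x := tb_conj x g
lemma ell_cj (g x : B3) : ell (cj g x) ↔ ell x := by unfold ell; rw [tb_cj]
lemma cj_of_comm {g x : B3} (h : Commute x g) : cj g x = x := by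
  simp [cj, mul_assoc, h.eq]

lemma R.rot {s : Fin 4 → B3} {a b c d : B3} (h : R s a b c d) :
    R s c d (cj (c * d) a) (cj (c * d) b) := by
  have := h.s2.s3.s1.s2
  simpa [cj, mul_assoc] using this

lemma R.tw2 {s : Fin 4 → B3} {a b c d : B3} (h : R s a b c d) :
    R s (cj (a * b) a) (cj (a * b) b) c d := by
  have := h.s1.s1
  simpa [cj, mul_assoc] using this

/-- Moving the third entry to the front. -/
lemma R.cyc3 {s : Fin 4 → B3} {a b c d : B3} (h : R s a b c d) :
    R s c (cj c a) (cj c b) d := by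
  have := h.s2.s1
  simpa [cj, mul_assoc] using this

lemma R.cyc4 {s : Fin 4 → B3} {a b c d : B3} (h : R s a b c d) :
    R s d (cj d a) (cj d b) (cj d c) := by
  have := h.s3.s2.s1
  simpa [cj, mul_assoc] using this

lemma R.tw3 {s : Fin 4 → B3} {a b c d : B3} (h : R s a b c d) :
    R s (cj (a * b * c) a) (cj (a * b * c) b) (cj (a * b * c) c) d := by
  have := h.cyc3.cyc3.cyc3
  simpa [cj, mul_assoc] using this

lemma R.tw4 {s : Fin 4 → B3} {a b c d : B3} (h : R s a b c d) :
    R s (cj (a * b * c * d) a) (cj (a * b * c * d) b) (cj (a * b * c * d) c)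
      (cj (a * b * c * d) d) := by
  have := h.cyc4.cyc4.cyc4.cyc4
  simpa [cj, mul_assoc] using this

lemma R.cyc3' {s : Fin 4 → B3} {a b c d : B3} (h : R s a b c d) :
    R s a c d (cj (c * d) b) := by
  have := h.s2.s3
  simpa [cj, mul_assoc] using this

lemma R.tw3' {s : Fin 4 → B3} {a b c d : B3} (h : R s a b c d) :
    R s a (cj (b * c * d) b) (cj (b * c * d) c) (cj (b * c * d) d) := by
  have := h.cyc3'.cyc3'.cyc3'
  simpa [cj, mul_assoc] using this

lemma comm_pow_of_eq {u x : B3} {m n : ℕ} (hmn : m < n) (h : cj (u ^ m) x = cj (u ^ n) x) :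
    Commute (u ^ (n - m - 1 + 1)) x := by
  have e : u ^ n = u ^ (n - m - 1 + 1) * u ^ m := by rw [← pow_add]; congr 1; omega
  rw [e, ← cj_cj] at h
  have h2 := congrArg (cj ((u ^ m)⁻¹)) h
  rw [cj_cj, cj_cj, mul_inv_cancel, cj_one, cj_one] at h2
  generalize u ^ (n - m - 1 + 1) = q at *
  change q * x = x * q
  conv_lhs => rw [h2]
  simp [cj, mul_assoc]

lemma iter_eq {s : Fin 4 → B3} (hfin : (hurwitzOrbit s).Finite) (F : ℕ → Fin 4 → B3)
    (hF : ∀ n, F n ∈ hurwitzOrbit s) : ∃ m n, m < n ∧ F m = F n := by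
  have := hfin.to_subtype
  obtain ⟨m, n, hne, he⟩ := Finite.exists_ne_map_eq_of_infinite
    (fun n => (⟨F n, hF n⟩ : hurwitzOrbit s))
  have he : F m = F n := congrArg Subtype.val he
  rcases lt_or_gt_of_ne hne with h | h
  · exact ⟨m, n, h, he⟩
  · exact ⟨n, m, h, he.symm⟩

lemma D2 {s : Fin 4 → B3} (hfin : (hurwitzOrbit s).Finite) {a b c d : B3} (h : R s a b c d) :
    Commute a b ∨ ell (a * b) := by
  have hF : ∀ n : ℕ, R s (cj ((a * b) ^ n) a) (cj ((a * b) ^ n) b) c d := by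
    intro n
    induction n with
    | zero => simpa [cj_one] using h
    | succ n ih =>
      have := ih.tw2
      rw [cj_mul, cj_of_comm ((Commute.refl (a * b)).pow_right n), cj_cj, cj_cj, ← pow_succ] at this
      exact this
  obtain ⟨m, n, hmn, he⟩ := iter_eq hfin _ hF
  by_cases hell : ell (a * b)
  · exact Or.inr hell
  left
  have h0 := ell_pow_comm hell _ (comm_pow_of_eq hmn (congrFun he 0 : _))
  have h1 := h0.eq
  have : a * (b * a) = a * (a * b) := by rw [← h1]; group
  exact (mul_left_cancel this).symm

lemma D3 {s : Fin 4 → B3} (hfin : (hurwitzOrbit s).Finite) {a b c d : B3} (h : R s a b c d) :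
    (ell (a * b * c) ∨ cen (a * b * c)) ∨ (Commute a b ∧ Commute b c) := by
  have hF : ∀ n : ℕ, R s (cj ((a * b * c) ^ n) a) (cj ((a * b * c) ^ n) b)
      (cj ((a * b * c) ^ n) c) d := by
    intro n
    induction n with
    | zero => simpa [cj_one] using h
    | succ n ih =>
      have := ih.tw3
      rw [cj_mul, cj_mul, cj_of_comm ((Commute.refl (a * b * c)).pow_right n), cj_cj, cj_cj,
        cj_cj, ← pow_succ] at this
      exact this
  obtain ⟨m, n, hmn, he⟩ := iter_eq hfin _ hF
  by_cases hell : ell (a * b * c)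
  · exact Or.inl (Or.inl hell)
  by_cases hcen : cen (a * b * c)
  · exact Or.inl (Or.inr hcen)
  right
  have h0 := ell_pow_comm hell _ (comm_pow_of_eq hmn (congrFun he 0 : _))
  have h1 := ell_pow_comm hell _ (comm_pow_of_eq hmn (congrFun he 1 : _))
  have h2 := ell_pow_comm hell _ (comm_pow_of_eq hmn (congrFun he 2 : _))
  exact ⟨b3_comm_trans hcen h0.symm h1, b3_comm_trans hcen h1.symm h2⟩

lemma D4 {s : Fin 4 → B3} (hfin : (hurwitzOrbit s).Finite) {a b c d : B3} (h : R s a b c d) :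
    (ell (a * b * c * d) ∨ cen (a * b * c * d)) ∨ Commute a b := by
  have hF : ∀ n : ℕ, R s (cj ((a * b * c * d) ^ n) a) (cj ((a * b * c * d) ^ n) b)
      (cj ((a * b * c * d) ^ n) c) (cj ((a * b * c * d) ^ n) d) := by
    intro n
    induction n with
    | zero => simpa [cj_one] using h
    | succ n ih =>
      have := ih.tw4
      rw [cj_mul, cj_mul, cj_mul, cj_of_comm ((Commute.refl (a * b * c * d)).pow_right n), cj_cj,
        cj_cj, cj_cj, cj_cj, ← pow_succ] at this
      exact this
  obtain ⟨m, n, hmn, he⟩ := iter_eq hfin _ hF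
  by_cases hell : ell (a * b * c * d)
  · exact Or.inl (Or.inl hell)
  by_cases hcen : cen (a * b * c * d)
  · exact Or.inl (Or.inr hcen)
  right
  have h0 := ell_pow_comm hell _ (comm_pow_of_eq hmn (congrFun he 0 : _))
  have h1 := ell_pow_comm hell _ (comm_pow_of_eq hmn (congrFun he 1 : _))
  exact b3_comm_trans hcen h0.symm h1

/-! ### Case I: both pairs non-commuting -/

lemma comm_of_mul_left {x y : B3} (h : Commute x (x * y)) : Commute x y := by
  have h1 := h.eq
  have : x * (x * y) = x * (y * x) := by rw [h1]; group
  exact mul_left_cancel this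

lemma comm_cj_left {c d : B3} (h : Commute d (cj d c)) : Commute c d := by
  have : Commute (cj d d) (cj d c) := by rwa [cj_self]
  exact (cj_comm.mp this).symm

lemma ell_inv {a : B3} : ell a⁻¹ ↔ ell a := by unfold ell; rw [tb_inv]

lemma c1_1 {s : Fin 4 → B3} (hfin : (hurwitzOrbit s).Finite) {a b c d : B3} (h : R s a b c d)
    (h1 : ¬ Commute a b) (h2 : ¬ Commute c d) :
    ell (a * b) ∧ ell (c * d) ∧ Commute (a * b) (c * d) ∧ ¬ ell c := by
  have hu : ell (a * b) := (D2 hfin h).resolve_left h1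
  have hv : ell (c * d) := (D2 hfin h.rot).resolve_left h2
  have hc : Commute (a * b) (c * d) := by
    apply ell_comm hu hv
    have := (D4 hfin h).resolve_right h1
    rwa [mul_assoc (a * b)] at this
  refine ⟨hu, hv, hc, fun hell => h2 ?_⟩
  have h3 := (D3 hfin h).resolve_right (fun hh => h1 hh.1)
  have h4 := ell_comm hu hell h3
  exact comm_of_mul_left (b3_comm_trans (ell_not_cen hu) h4.symm hc)

lemma c1_d {s : Fin 4 → B3} (hfin : (hurwitzOrbit s).Finite) {a b c d : B3} (h : R s a b c d)
    (h1 : ¬ Commute a b) (h2 : ¬ Commute c d) : ¬ ell d :=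
  (c1_1 hfin h.s3 h1 (fun hh => h2 (comm_cj_left hh))).2.2.2

lemma c1_a {s : Fin 4 → B3} (hfin : (hurwitzOrbit s).Finite) {a b c d : B3} (h : R s a b c d)
    (h1 : ¬ Commute a b) (h2 : ¬ Commute c d) : ¬ ell a := by
  have := (c1_1 hfin h.rot h2 (fun hh => h1 (cj_comm.mp hh))).2.2.2
  rwa [ell_cj] at this

lemma c1_2 {s : Fin 4 → B3} (hfin : (hurwitzOrbit s).Finite) {a b c d : B3} (h : R s a b c d)
    (h1 : ¬ Commute a b) (h2 : ¬ Commute c d) :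
    ell (a * b * c) ∧ |tb (a * b)| = 1 ∧ cen ((a * b)⁻¹ * (c * d)) := by
  obtain ⟨hu, hv, huv, hc⟩ := c1_1 hfin h h1 h2
  have hd := c1_d hfin h h1 h2
  have hp : ell (a * b * c) := by
    refine ((D3 hfin h).resolve_right (fun hh => h1 hh.1)).resolve_right (fun hcen => hc ?_)
    have := (ell_mul_cen (a := (a * b)⁻¹) hcen).mpr (ell_inv.mpr hu)
    simpa [mul_assoc] using this
  have huv' : ell (a * b * (c * d)) := by
    have := (D4 hfin h).resolve_right h1
    rw [mul_assoc (a * b)] at this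
    refine this.resolve_right (fun hcen => hd ?_)
    have := (ell_mul_cen (a := (a * b * c)⁻¹) hcen).mpr (ell_inv.mpr hp)
    simpa [mul_assoc] using this
  exact ⟨hp, ell_eq hu hv huv' huv⟩

lemma c1_alg {u p d f z : B3} (hz : cen z) (hp : cen (p ^ 3)) (hd : d = p⁻¹ * u⁻¹ * z)
    (hf : f = cj d (u⁻¹ * p) * u) :
    d * cj f u = p * (u * p * u⁻¹) * (z * (p ^ 3)⁻¹) := by
  have e1 : cj d (u⁻¹ * p) = cj (p⁻¹ * u⁻¹) (u⁻¹ * p) := by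
    rw [hd, ← cj_cj, cj_of_comm (hz.comm _)]
  rw [hf, e1, hd]
  have e2 : z * cj (cj (p⁻¹ * u⁻¹) (u⁻¹ * p) * u) u = cj (cj (p⁻¹ * u⁻¹) (u⁻¹ * p) * u) u * z :=
    ((hz.comm _).eq).symm
  rw [mul_assoc _ z, e2]
  have e3 : z * (p ^ 3)⁻¹ = (p ^ 3)⁻¹ * z := ((hz.comm _).eq).symm
  have e4 : p * (u * p * u⁻¹) * (p ^ 3)⁻¹ = (p ^ 3)⁻¹ * (p * (u * p * u⁻¹)) := (hp.inv.comm _).eq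
  rw [e3, ← mul_assoc, ← mul_assoc, e4]
  congr 1
  simp only [cj]
  group

lemma c1_3 {s : Fin 4 → B3} (hfin : (hurwitzOrbit s).Finite) {a b c d : B3} (h : R s a b c d)
    (h1 : ¬ Commute a b) (h2 : ¬ Commute c d) : tb (a * b * c) = 0 := by
  obtain ⟨hp, hu1, hw⟩ := c1_2 hfin h h1 h2
  obtain ⟨hu, hv, huv, hc⟩ := c1_1 hfin h h1 h2
  by_contra hne
  have hp1 : |tb (a * b * c)| = 1 := by
    have : 0 < |tb (a * b * c)| := abs_pos.mpr hne
    unfold ell at hp; omega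
  have hp3 := cen_cube hp1
  have hu3 := cen_cube hu1
  have hr := h.rot.s1
  have e0 : cj (c * d) a * cj (c * d) b = a * b := by rw [cj_mul, cj_of_comm huv]
  have hab' : ¬ Commute (cj (c * d) a) (cj (c * d) b) := fun hh => h1 (cj_comm.mp hh)
  generalize cj (c * d) a = a' at *
  generalize cj (c * d) b = b' at *
  have hr2 := hr.cyc3'.tw3'
  have e1 : a' * b' * cj (a' * b') (d⁻¹ * c * d) = cj d c * (a' * b') := by
    simp only [cj]; group
  rw [e1] at hr2
  have hD : ell (d * cj (cj d c * (a' * b')) (a' * b')) ∨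
      cen (d * cj (cj d c * (a' * b')) (a' * b')) := by
    rw [← cj_mul, ← mul_assoc]
    refine (D3 hfin hr2).resolve_right ?_
    rintro ⟨-, hh⟩
    exact hab' (cj_comm.mp hh)
  rw [e0] at hD
  set u := a * b with hudef
  set p := u * c with hpdef
  have ec : c = u⁻¹ * p := by rw [hpdef]; group
  have hd : d = p⁻¹ * u⁻¹ * (u ^ 3 * (u⁻¹ * (c * d))) := by
    rw [hpdef]; group
  have hz : cen (u ^ 3 * (u⁻¹ * (c * d))) := hu3.mul hw
  rw [c1_alg hz hp3 hd (by rw [← ec])] at hD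
  have hzz := hz.mul hp3.inv
  have hD2 : ell (p * (u * p * u⁻¹)) ∨ cen (p * (u * p * u⁻¹)) := by
    rcases hD with hD | hD
    · left; rwa [ell_mul_cen hzz] at hD
    · right
      have := hD.mul hzz.inv
      rwa [mul_inv_cancel_right] at this
  have hpe : ell (u * p * u⁻¹) := by
    have := (ell_cj u⁻¹ p).mpr hp
    simpa [cj] using this
  have hcm := ell_comm hp hpe hD2
  have hcu : Commute p u⁻¹ := by
    apply b3_normalize (by rw [tb_inv]; exact hu1) hp
    simpa using hcm
  have hcu : Commute p u := by simpa using hcu.inv_right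
  have hcu : Commute u c := comm_of_mul_left hcu.symm
  exact h2 (comm_of_mul_left (b3_comm_trans (ell_not_cen hu) hcu.symm huv))

lemma c1_4 {s : Fin 4 → B3} (hfin : (hurwitzOrbit s).Finite) {a b c d : B3} (h : R s a b c d)
    (h1 : ¬ Commute a b) (h2 : ¬ Commute c d) : tb (a * b * a) = 0 := by
  obtain ⟨hp, hu1, hw⟩ := c1_2 hfin h h1 h2
  have := c1_3 hfin h.rot h2 (fun hh => h1 (cj_comm.mp hh))
  have e : c * d * cj (c * d) a = a * (c * d) := by simp only [cj]; group
  rw [e, tb_mul_comm] at this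
  have e2 : c * d * a = a * b * a * ((a * b)⁻¹ * (c * d)) := by
    rw [mul_assoc (a * b), (hw.comm a).eq]; group
  rw [e2] at this
  have h3 := abs_tb_cen (a * b * a) hw
  rw [this] at h3
  simpa using h3.symm

lemma c1_5 {s : Fin 4 → B3} (hfin : (hurwitzOrbit s).Finite) {a b c d : B3} (h : R s a b c d)
    (h1 : ¬ Commute a b) (h2 : ¬ Commute c d) :
    ∃ c' d', R s a b c' d' ∧ Commute a c' ∧ ¬ Commute c' d' := by
  obtain ⟨hp, hu1, hw⟩ := c1_2 hfin h h1 h2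
  obtain ⟨hu, hv, huv, hc⟩ := c1_1 hfin h h1 h2
  have ha := c1_a hfin h h1 h2
  have hA := c1_4 hfin h h1 h2
  have hC := c1_3 hfin h h1 h2
  have hsum := b3_sum hu1 hA hC
  by_contra hno
  push Not at hno
  have key : ∀ {c' d'}, R s a b c' d' → ¬ Commute c' d' → ell (a * c') := by
    intro c' d' hr hn
    exact (D2 hfin hr.s2).resolve_left (fun hh => hn (hno c' d' hr hh))
  have ev : c * d = a * b * ((a * b)⁻¹ * (c * d)) := by group
  have k0 := key h h2
  have r1 : R s a b (cj (c * d) c) (cj (c * d) d) := by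
    have := h.s3.s3
    simpa [cj, mul_assoc] using this
  have r2 : R s a b (cj (c * d)⁻¹ c) (cj (c * d)⁻¹ d) := by
    have := h.i3.i3
    simpa [cj, mul_assoc] using this
  have k1 := key r1 (fun hh => h2 (cj_comm.mp hh))
  have k2 := key r2 (fun hh => h2 (cj_comm.mp hh))
  have e1 : cj (c * d) c = (a * b)⁻¹ * c * (a * b) := by
    rw [ev, ← cj_cj, cj_of_comm (hw.comm _)]; rfl
  have e2 : cj (c * d)⁻¹ c = (a * b) * c * (a * b)⁻¹ := by
    rw [ev, mul_inv_rev, ← cj_cj, cj_of_comm (hw.inv.comm c)]; simp [cj]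
  rw [e1] at k1
  rw [e2] at k2
  unfold ell at ha hc k0 k1 k2
  have hle : |tb a * tb c| ≤ 3 := by
    rw [← hsum]
    rw [abs_le] at *
    omega
  rw [abs_mul] at hle
  have : 2 ≤ |tb a| := by omega
  have : 2 ≤ |tb c| := by omega
  nlinarith

lemma case1 {s : Fin 4 → B3} (hfin : (hurwitzOrbit s).Finite) {a b c d : B3} (h : R s a b c d)
    (h1 : ¬ Commute a b) (h2 : ¬ Commute c d) :
    ∃ x y z0 z1 z2 z3 : B3, x * y * x = y * x * y ∧ cen z0 ∧ cen z1 ∧ cen z2 ∧ cen z3 ∧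
      R s (x * z0) (y * z1) (x * z2) (y * z3) := by
  obtain ⟨c', d', hr, hcom, hn⟩ := c1_5 hfin h h1 h2
  clear h h2
  obtain ⟨hp, hu1, hw⟩ := c1_2 hfin hr h1 hn
  have hA := c1_4 hfin hr h1 hn
  have hC := c1_3 hfin hr h1 hn
  have hac := b3_comm_same hu1 hA hC hcom
  have hsq := cen_sq hA
  have hu3 := cen_cube hu1
  set z : B3 := ((a * b * a) ^ 2)⁻¹ * (a * b) ^ 3 with hzdef
  have hz : cen z := hsq.inv.mul hu3
  have hbab : b * a * b = a * b * a * z := by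
    rw [hzdef]; simp [pow_succ, mul_assoc]
  have hd : d' = b * (((a * b)⁻¹ * (c' * d')) * (a⁻¹ * c')⁻¹) := by
    rw [← mul_assoc b, ((hac.inv).comm (b * ((a * b)⁻¹ * (c' * d')))).eq]; group
  refine ⟨a, b * z⁻¹, 1, z, a⁻¹ * c', z * (((a * b)⁻¹ * (c' * d')) * (a⁻¹ * c')⁻¹), ?_, ?_, hz, hac,
    hz.mul (hw.mul hac.inv), ?_⟩
  · have c1 : z⁻¹ * a = a * z⁻¹ := ((hz.inv.comm a).eq).symm
    have c2 : z⁻¹ * (a * (b * z⁻¹)) = (a * (b * z⁻¹)) * z⁻¹ := ((hz.inv.comm _).eq).symm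
    calc a * (b * z⁻¹) * a = a * b * (z⁻¹ * a) := by group
      _ = a * b * a * z⁻¹ := by rw [c1]; group
      _ = (b * a * b) * z⁻¹ * z⁻¹ := by rw [hbab]; group
      _ = b * ((a * (b * z⁻¹)) * z⁻¹) := by group
      _ = b * z⁻¹ * a * (b * z⁻¹) := by rw [← c2]; group
  · have := hz.mul hz.inv
    rwa [mul_inv_cancel] at this
  · have e3 : b * z⁻¹ * (z * (((a * b)⁻¹ * (c' * d')) * (a⁻¹ * c')⁻¹)) = d' := by
      conv_rhs => rw [hd]
      group
    rw [e3]
    simpa using hr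

/-! ### Counting in Case I -/

lemma hE_a {G : Type*} [Group G] (i : Fin 3) (t : Fin 4 → G) :
    hEquiv (n := 4) i t i.castSucc = t i.succ := by
  fin_cases i <;> rfl
lemma hE_b {G : Type*} [Group G] (i : Fin 3) (t : Fin 4 → G) :
    hEquiv (n := 4) i t i.succ = (t i.succ)⁻¹ * t i.castSucc * t i.succ := by
  fin_cases i <;> rfl
lemma hE_c {G : Type*} [Group G] (i : Fin 3) (t : Fin 4 → G) {j : Fin 4} (h1 : j ≠ i.castSucc)
    (h2 : j ≠ i.succ) : hEquiv (n := 4) i t j = t j := by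
  fin_cases i <;> fin_cases j <;> first | rfl | exact absurd rfl h1 | exact absurd rfl h2

/-- Six matrices. -/
def eM : Fin 6 → SLZ := ![m1, m2, m2⁻¹ * m1 * m2, m2 * m1 * m2⁻¹, m2⁻¹ * m2⁻¹ * m1 * m2 * m2,
  m1 * m2⁻¹ * m1 * m2 * m1⁻¹]

/-- Six braids. -/
def eB : Fin 6 → B3 := ![sg1, sg2, sg2⁻¹ * sg1 * sg2, sg2 * sg1 * sg2⁻¹,
  sg2⁻¹ * sg2⁻¹ * sg1 * sg2 * sg2, sg1 * sg2⁻¹ * sg1 * sg2 * sg1⁻¹]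

lemma rho_eB (j : Fin 6) : rho (eB j) = eM j := by
  fin_cases j <;> simp [eB, eM, rho_1, rho_2]

lemma exp_eB (j : Fin 6) : expSumHom (eB j) = Multiplicative.ofAdd 1 := by
  fin_cases j <;> simp [eB, expSum_1, expSum_2]

/-- Entries of the six matrices. -/
def eI : Fin 6 → Fin 4 → ℤ := ![![1, 1, 0, 1], ![1, 0, -1, 1], ![0, 1, -1, 2], ![2, 1, -1, 0],
  ![-1, 1, -4, 3], ![-1, 4, -1, 3]]

lemma eM_eI (j : Fin 6) : (eM j).1 = !![eI j 0, eI j 1; eI j 2, eI j 3] := by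
  revert j; decide

/-- The 27 tuples in the orbit of `(σ₁, σ₂, σ₁, σ₂)`. -/
def tbl : Fin 27 → Fin 4 → Fin 6 := ![![0,1,0,1], ![1,2,0,1], ![0,0,3,1], ![0,1,1,2], ![2,0,0,1],
  ![1,0,1,1], ![1,2,1,2], ![0,3,1,1], ![0,0,1,0], ![0,1,2,0], ![2,0,1,2], ![1,1,2,1], ![1,1,4,2],
  ![1,2,2,0], ![3,1,1,1], ![0,0,0,3], ![0,2,0,0], ![2,1,2,2], ![2,0,2,0], ![1,1,1,4], ![1,4,2,2],
  ![2,5,0,0], ![2,2,0,2], ![2,2,5,0], ![4,2,2,2], ![5,0,0,0], ![2,2,2,5]]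

/-- The action of the elementary moves on the 27 tuples. -/
def mv : Fin 3 → Fin 27 → Fin 27 := ![
  ![1, 4, 2, 6, 0, 7, 10, 14, 8, 13, 3, 11, 12, 18, 5, 15, 21, 20, 9, 19, 24, 25, 22, 23, 17, 16,
    26],
  ![2, 5, 7, 3, 4, 11, 12, 0, 9, 16, 17, 1, 20, 13, 14, 15, 8, 22, 23, 19, 6, 18, 10, 21, 24, 25,
    26],
  ![3, 6, 8, 9, 10, 5, 13, 7, 15, 0, 18, 19, 11, 1, 14, 2, 16, 17, 4, 12, 20, 21, 26, 22, 24, 25,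
    23]]

lemma tbl_a : ∀ i k, tbl (mv i k) i.castSucc = tbl k i.succ := by decide
lemma tbl_c : ∀ i k, ∀ j : Fin 4, j ≠ i.castSucc → j ≠ i.succ → tbl (mv i k) j = tbl k j := by
  decide

/-- Product of entry quadruples. -/
def mI (x y : Fin 4 → ℤ) : ℤ × ℤ × ℤ × ℤ := (x 0 * y 0 + x 1 * y 2, x 0 * y 1 + x 1 * y 3,
  x 2 * y 0 + x 3 * y 2, x 2 * y 1 + x 3 * y 3)

lemma tbl_b : ∀ i k, mI (eI (tbl k i.castSucc)) (eI (tbl k i.succ)) =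
    mI (eI (tbl k i.succ)) (eI (tbl (mv i k) i.succ)) := by decide

lemma eB_conj {x y w : Fin 6} (h : mI (eI x) (eI y) = mI (eI y) (eI w)) :
    (eB y)⁻¹ * eB x * eB y = eB w := by
  rw [mul_assoc, inv_mul_eq_iff_eq_mul]
  apply b3_faithful
  · rw [map_mul, map_mul, rho_eB, rho_eB, rho_eB]
    apply Subtype.ext
    change (eM x).1 * (eM y).1 = (eM y).1 * (eM w).1
    rw [eM_eI, eM_eI, eM_eI, Matrix.mul_fin_two, Matrix.mul_fin_two]
    simp only [mI, Prod.mk.injEq] at h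
    rw [h.1, h.2.1, h.2.2.1, h.2.2.2]
  · rw [map_mul, map_mul, exp_eB, exp_eB, exp_eB]

/-- Parametrization of a set containing the orbit. -/
def fam (φ : B3 →* B3) (z : Fin 4 → B3) (k : Fin 27 × Equiv.Perm (Fin 4)) : Fin 4 → B3 :=
  fun j => φ (eB (tbl k.1 j)) * z (k.2 j)

lemma fam_move (φ : B3 →* B3) (z : Fin 4 → B3) (hz : ∀ j, cen (z j)) (i : Fin 3)
    (k : Fin 27 × Equiv.Perm (Fin 4)) :
    hEquiv (n := 4) i (fam φ z k) =
      fam φ z (mv i k.1, k.2 * Equiv.swap i.castSucc i.succ) := by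
  funext j
  by_cases h1 : j = i.castSucc
  · subst h1
    rw [hE_a]
    simp [fam, tbl_a]
  by_cases h2 : j = i.succ
  · subst h2
    rw [hE_b]
    simp only [fam, Equiv.Perm.mul_apply, Equiv.swap_apply_right]
    rw [← eB_conj (tbl_b i k.1)]
    generalize hq : z (k.2 i.castSucc) = z1
    generalize hq2 : z (k.2 i.succ) = z2
    have c1 : cen z1 := by rw [← hq]; exact hz _
    have c2 : cen z2 := by rw [← hq2]; exact hz _
    simp only [map_mul, map_inv]
    generalize φ (eB (tbl k.1 i.castSucc)) = p
    generalize φ (eB (tbl k.1 i.succ)) = q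
    calc (q * z2)⁻¹ * (p * z1) * (q * z2) = cj z2 (q⁻¹ * p * (z1 * q)) := by simp [cj, mul_assoc]
      _ = q⁻¹ * p * q * z1 := by rw [cj_of_comm (c2.comm _), ← (c1.comm q).eq]; group
  · rw [hE_c i _ h1 h2]
    simp [fam, tbl_c i k.1 j h1 h2, Equiv.swap_apply_of_ne_of_ne h1 h2]

lemma case1_count {s : Fin 4 → B3} {x y z0 z1 z2 z3 : B3} (hxy : x * y * x = y * x * y)
    (h0 : cen z0) (h1 : cen z1) (h2 : cen z2) (h3 : cen z3)
    (h : R s (x * z0) (y * z1) (x * z2) (y * z3)) : (hurwitzOrbit s).ncard ≤ 648 := by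
  have hz : ∀ j, cen (![z0, z1, z2, z3] j) := by
    intro j; fin_cases j
    exacts [h0, h1, h2, h3]
  refine (orbit_card_le h (S := Set.range (fam (b3Lift x y hxy) ![z0, z1, z2, z3]))
    (Set.finite_range _) ?_ ?_).trans ?_
  · refine ⟨(0, 1), ?_⟩
    funext j
    fin_cases j
    · simp [fam, tbl, eB, b3Lift_1, b3Lift_2]
    · simp [fam, tbl, eB, b3Lift_1, b3Lift_2]
    · simp [fam, tbl, eB, b3Lift_1, b3Lift_2]
    · simp [fam, tbl, eB, b3Lift_1, b3Lift_2]
  · rintro i _ ⟨k, rfl⟩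
    exact ⟨_, (fam_move _ _ hz i k).symm⟩
  · rw [← Set.image_univ]
    refine (Set.ncard_image_le Set.finite_univ).trans ?_
    rw [Set.ncard_univ, Nat.card_eq_fintype_card, Fintype.card_prod, Fintype.card_perm]
    simp [Nat.factorial]

/-! ### Case II -/

lemma cen_cj {a g : B3} : cen (cj g a) ↔ cen a :=
  ⟨fun h => cen_conj h, fun h => by
    have : cj g a = a := cj_of_comm (h.comm g).symm
    rwa [this]⟩

/-- Product of a tuple. -/
def prod4 (t : Fin 4 → B3) : B3 := t 0 * t 1 * t 2 * t 3

lemma prod4_move (i : Fin 3) (t : Fin 4 → B3) : prod4 (hEquiv (n := 4) i t) = prod4 t := by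
  have ht : t = ![t 0, t 1, t 2, t 3] := by funext j; fin_cases j <;> rfl
  rw [ht]
  generalize t 0 = a
  generalize t 1 = b
  generalize t 2 = c
  generalize t 3 = d
  fin_cases i
  · change prod4 (hEquiv (n := 4) (0 : Fin 3) _) = _
    rw [hE0]; simp [prod4, mul_assoc]
  · change prod4 (hEquiv (n := 4) (1 : Fin 3) _) = _
    rw [hE1]; simp [prod4, mul_assoc]
  · change prod4 (hEquiv (n := 4) (2 : Fin 3) _) = _
    rw [hE2]; simp [prod4, mul_assoc]

/-- The set of allowed entries with a given label. -/
def Yset (x : Fin 4 → B3) (j : Fin 4) (e : Bool) : Set B3 :=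
  if j = 1 then {g | ∃ m, Commute (x 0) m ∧ g = x 1 * m}
  else if e then {cj (x 1) (x j)} else {x j}

/-- The set of tuples with given labels and product. -/
def Sset (x : Fin 4 → B3) (k : Equiv.Perm (Fin 4) × (Fin 4 → Bool)) : Set (Fin 4 → B3) :=
  {t | (∀ i, t i ∈ Yset x (k.1 i) (k.2 i)) ∧ prod4 t = prod4 x}

lemma Sset_sub (x : Fin 4 → B3) (k : Equiv.Perm (Fin 4) × (Fin 4 → Bool)) {t t' : Fin 4 → B3}
    (h : t ∈ Sset x k) (h' : t' ∈ Sset x k) : t = t' := by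
  have he : ∀ i, i ≠ k.1.symm 1 → t i = t' i := by
    intro i hi
    have h1 := h.1 i
    have h2 := h'.1 i
    have hne : k.1 i ≠ 1 := fun hh => hi (by rw [← hh]; simp)
    simp only [Yset, hne, if_false] at h1 h2
    split_ifs at h1 h2
    · rw [h1, h2]
    · rw [h1, h2]
  have hp : prod4 t = prod4 t' := h.2.trans h'.2.symm
  unfold prod4 at hp
  generalize k.1.symm 1 = i0 at he
  funext i
  by_cases hi : i = i0
  · subst hi
    fin_cases i
    · have e1 := he 1 (by decide); have e2 := he 2 (by decide); have e3 := he 3 (by decide)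
      rw [e1, e2, e3] at hp
      simpa using hp
    · have e1 := he 0 (by decide); have e2 := he 2 (by decide); have e3 := he 3 (by decide)
      rw [e1, e2, e3] at hp
      simpa using hp
    · have e1 := he 0 (by decide); have e2 := he 1 (by decide); have e3 := he 3 (by decide)
      rw [e1, e2, e3] at hp
      simpa using hp
    · have e1 := he 0 (by decide); have e2 := he 1 (by decide); have e3 := he 2 (by decide)
      rw [e1, e2, e3] at hp
      simpa using hp
  · exact he i hi

open Classical in
/-- A choice of a tuple for every labelling. -/
noncomputable def Schoice (x : Fin 4 → B3) (k : Equiv.Perm (Fin 4) × (Fin 4 → Bool)) : Fin 4 → B3 :=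
  if h : (Sset x k).Nonempty then h.some else x

lemma Sunion_sub (x : Fin 4 → B3) : (⋃ k, Sset x k) ⊆ Set.range (Schoice x) := by
  intro t ht
  obtain ⟨k, hk⟩ := Set.mem_iUnion.mp ht
  refine ⟨k, ?_⟩
  have hne : (Sset x k).Nonempty := ⟨t, hk⟩
  rw [Schoice, dif_pos hne]
  exact Sset_sub x k hne.some_mem hk

lemma Y_move (x : Fin 4 → B3) (h0 : ¬ cen (x 0)) (hb : cen (x 1 ^ 2))
    (hc : ∀ j, j ≠ 1 → Commute (x 0) (x j))
    (hn : ∀ m, Commute (x 0) m → Commute (x 0) (cj (x 1) m))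
    {j j' : Fin 4} {e e' : Bool} (hj : j ≠ j') {g h : B3} (hg : g ∈ Yset x j e)
    (hh : h ∈ Yset x j' e') : ∃ e'', h⁻¹ * g * h ∈ Yset x j e'' := by
  have hA : ∀ {m n}, Commute (x 0) m → Commute (x 0) n → Commute m n := fun hm hn =>
    b3_comm_trans h0 hm.symm hn
  have hmem : ∀ {j e g}, j ≠ 1 → g ∈ Yset x j e → Commute (x 0) g := by
    intro j e g hj hg
    rw [Yset, if_neg hj] at hg
    split_ifs at hg
    · rw [hg]; exact hn _ (hc j hj)
    · rw [hg]; exact hc j hj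
  by_cases h1 : j = 1
  · subst h1
    have hj' : j' ≠ 1 := fun q => hj q.symm
    have hhA := hmem hj' hh
    simp only [Yset, if_true] at hg
    obtain ⟨m, hm, rfl⟩ := hg
    refine ⟨false, ?_⟩
    simp only [Yset, if_true]
    refine ⟨cj (x 1) h⁻¹ * m * h, ?_, by simp [cj, mul_assoc]⟩
    exact ((hn _ hhA.inv_right).mul_right hm).mul_right hhA
  · have hgA := hmem h1 hg
    by_cases h2 : j' = 1
    · subst h2
      simp only [Yset, if_true] at hh
      obtain ⟨m, hm, rfl⟩ := hh
      refine ⟨!e, ?_⟩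
      have e1 : (x 1 * m)⁻¹ * g * (x 1 * m) = cj (x 1) g := by
        change cj (x 1 * m) g = _
        rw [← cj_cj]
        exact cj_of_comm (hA (hn _ hgA) hm)
      rw [e1]
      rw [Yset, if_neg h1] at hg ⊢
      cases e
      · have hg : g = x j := hg
        simp [hg]
      · have hg : g = cj (x 1) (x j) := hg
        rw [hg, cj_cj, ← pow_two, cj_of_comm (hb.comm _)]
        simp
    · refine ⟨e, ?_⟩
      have := hmem h2 hh
      have e1 : h⁻¹ * g * h = g := cj_of_comm (hA hgA this)
      rwa [e1]

lemma Sunion_move (x : Fin 4 → B3) (h0 : ¬ cen (x 0)) (hb : cen (x 1 ^ 2))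
    (hc : ∀ j, j ≠ 1 → Commute (x 0) (x j))
    (hn : ∀ m, Commute (x 0) m → Commute (x 0) (cj (x 1) m)) (i : Fin 3) (t : Fin 4 → B3)
    (ht : t ∈ ⋃ k, Sset x k) : hEquiv (n := 4) i t ∈ ⋃ k, Sset x k := by
  obtain ⟨⟨π, ε⟩, hk, hp⟩ := Set.mem_iUnion.mp ht
  have hne : i.castSucc ≠ i.succ := by simp [Fin.ext_iff]
  obtain ⟨e'', he⟩ := Y_move x h0 hb hc hn (j := π i.castSucc) (j' := π i.succ)
    (fun q => hne (π.injective q)) (hk i.castSucc) (hk i.succ)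
  refine Set.mem_iUnion.mpr ⟨⟨π * Equiv.swap i.castSucc i.succ,
    fun j => if j = i.castSucc then ε i.succ else if j = i.succ then e'' else ε j⟩, ?_, ?_⟩
  · intro j
    by_cases h1 : j = i.castSucc
    · subst h1
      rw [hE_a]
      simpa using hk i.succ
    by_cases h2 : j = i.succ
    · subst h2
      rw [hE_b]
      simpa [hne.symm] using he
    · rw [hE_c i _ h1 h2]
      simpa [h1, h2, Equiv.swap_apply_of_ne_of_ne h1 h2] using hk j
  · rw [prod4_move]; exact hp

lemma case2_count {s : Fin 4 → B3} {a b c d : B3} (h : R s a b c d) (ha : ¬ cen a)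
    (hb : cen (b ^ 2)) (hac : Commute a c) (had : Commute a d)
    (hn : ∀ m, Commute a m → Commute a (cj b m)) : (hurwitzOrbit s).ncard ≤ 648 := by
  set x : Fin 4 → B3 := ![a, b, c, d] with hx
  have hc : ∀ j, j ≠ 1 → Commute (x 0) (x j) := by
    intro j hj
    fin_cases j
    · exact Commute.refl _
    · exact absurd rfl hj
    · exact hac
    · exact had
  have hf : (⋃ k, Sset x k).Finite := (Set.finite_range (Schoice x)).subset (Sunion_sub x)
  refine (orbit_card_le h hf ?_ (Sunion_move x ha hb hc hn)).trans ?_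
  · refine Set.mem_iUnion.mpr ⟨⟨1, fun _ => false⟩, ?_, rfl⟩
    intro i
    by_cases hi : i = 1
    · subst hi
      simp only [Yset, Equiv.Perm.one_apply, if_true]
      exact ⟨1, Commute.one_right _, by rw [mul_one]⟩
    · simp [Yset, hi, hx]
  · refine (Set.ncard_le_ncard (Sunion_sub x) (Set.finite_range _)).trans ?_
    rw [← Set.image_univ]
    refine (Set.ncard_image_le Set.finite_univ).trans ?_
    rw [Set.ncard_univ, Nat.card_eq_fintype_card, Fintype.card_prod, Fintype.card_perm]
    simp [Nat.factorial]

/-- The second case with `b` and `d` not commuting. -/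
lemma case2a {s : Fin 4 → B3} (hfin : (hurwitzOrbit s).Finite)
    (hno : ∀ a b c d, R s a b c d → Commute a b ∨ Commute c d) {a b c d : B3} (h : R s a b c d)
    (ha : ¬ cen a) (hc : ¬ cen c) (hab : ¬ Commute a b) (hbd : ¬ Commute b d) :
    (hurwitzOrbit s).ncard ≤ 648 := by
  have hcd : Commute c d := (hno _ _ _ _ h).resolve_left hab
  have h1 : Commute a (b * c * b⁻¹) := (hno _ _ _ _ h.i2).resolve_right hbd
  have h2 : Commute a c := by
    refine (hno _ _ _ _ h.s2).resolve_right (fun hh => hbd ?_)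
    have : Commute (cj c b) (cj c d) := by rw [cj_of_comm hcd.symm]; exact hh
    exact cj_comm.mp this
  have had : Commute a d := b3_comm_trans hc h2 hcd
  have hbc : ¬ Commute b c := fun hh => hbd (b3_comm_trans hc hh hcd)
  have hcc : Commute c (b⁻¹ * c * b) := by
    have h3 : Commute c (b * c * b⁻¹) := b3_comm_trans ha h2.symm h1
    have h4 : Commute (cj b c) (cj b (b * c * b⁻¹)) := cj_comm.mpr h3
    have e : cj b (b * c * b⁻¹) = c := by simp [cj, mul_assoc]
    rw [e] at h4
    exact h4.symm
  have hell : ell (b * c) := by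
    refine (D2 hfin (a := b) (b := c) (c := cj c (cj b a)) (d := d) ?_).resolve_left hbc
    have := h.s1.s2
    simpa [cj] using this
  have hb2 := b3_dihedral hcc hbc hell
  refine case2_count h ha hb2 h2 had (fun m hm => ?_)
  have hmc : Commute m c := b3_comm_trans ha hm.symm h2
  have h5 : Commute (cj b m) (cj b c) := cj_comm.mpr hmc
  have hcc' : Commute c (cj b c) := hcc
  have h6 : Commute a (cj b c) := b3_comm_trans hc h2 hcc'
  exact b3_comm_trans (fun q => hc (cen_cj.mp q)) h6 h5.symm

lemma case2 {s : Fin 4 → B3} (hfin : (hurwitzOrbit s).Finite)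
    (hno : ∀ a b c d, R s a b c d → Commute a b ∨ Commute c d) {a b c d : B3} (h : R s a b c d)
    (ha : ¬ cen a) (hb : ¬ cen b) (hc : ¬ cen c) (hd : ¬ cen d) (hab : ¬ Commute a b) :
    (hurwitzOrbit s).ncard ≤ 648 := by
  by_cases hbd : Commute b d
  · refine case2a hfin hno h.s1 hb hc (fun q => hab (comm_cj_left q)) (fun q => hab ?_)
    have : Commute (cj b a) (cj b d) := by rw [cj_of_comm hbd.symm]; exact q
    exact b3_comm_trans hd (cj_comm.mp this) hbd.symm
  · exact case2a hfin hno h ha hc hab hbd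

lemma main_aux {s : Fin 4 → B3} (hfin : (hurwitzOrbit s).Finite) {a b c d : B3} (h : R s a b c d)
    (ha : ¬ cen a) (hb : ¬ cen b) (hc : ¬ cen c) (hd : ¬ cen d) (hab : ¬ Commute a b) :
    (hurwitzOrbit s).ncard ≤ 648 := by
  by_cases hno : ∀ a b c d, R s a b c d → Commute a b ∨ Commute c d
  · exact case2 hfin hno h ha hb hc hd hab
  · push Not at hno
    obtain ⟨a', b', c', d', hr, h1, h2⟩ := hno
    obtain ⟨x, y, z0, z1, z2, z3, hxy, c0, c1, c2, c3, ht⟩ := case1 hfin hr h1 h2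
    exact case1_count hxy c0 c1 c2 c3 ht

lemma main_thm (s : Fin 4 → B3) (hirr : ¬ IsReducible s) (hfin : (hurwitzOrbit s).Finite) :
    (hurwitzOrbit s).ncard ≤ 648 := by
  have hred : ∀ i0 : Fin 4, ¬ ∀ j, Commute (s i0) (s j) := by
    intro i0 hh
    refine hirr ⟨{i0}, ⟨i0, rfl⟩, ⟨i0 + 1, ?_⟩, ?_⟩
    · fin_cases i0 <;> simp
    · rintro i rfl j -
      exact hh j
  have hcen : ∀ i, ¬ cen (s i) := fun i hi => hred i (fun j => (hi.comm _).symm)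
  have hR : R s (s 0) (s 1) (s 2) (s 3) := by
    refine ⟨1, ?_⟩
    rw [hurwitzAct_one]
    funext j; fin_cases j <;> rfl
  by_cases h01 : Commute (s 0) (s 1)
  · by_cases h12 : Commute (s 1) (s 2)
    · by_cases h23 : Commute (s 2) (s 3)
      · exfalso
        have h02 := b3_comm_trans (hcen 1) h01 h12
        refine hred 0 (fun j => ?_)
        fin_cases j
        · exact Commute.refl _
        · exact h01
        · exact h02
        · exact b3_comm_trans (hcen 2) h02 h23
      · exact main_aux hfin hR.rot (hcen 2) (hcen 3) (fun q => hcen 0 (cen_cj.mp q))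
          (fun q => hcen 1 (cen_cj.mp q)) h23
    · exact main_aux hfin hR.s1.s2 (hcen 1) (hcen 2)
        (fun q => hcen 0 (cen_conj (cen_conj q))) (hcen 3) h12
  · exact main_aux hfin hR (hcen 0) (hcen 1) (hcen 2) (hcen 3) h01

/-- An irreducible degree `3`, length `4` braid system with finite
Hurwitz orbit has orbit of size at most `648`. -/
theorem hurwitzOrbit_card_le_648 (s : Fin 4 → BraidGroup 3)
    (hirr : ¬ IsReducible s)
    (hfin : (hurwitzOrbit s).Finite) :
    (hurwitzOrbit s).ncard ≤ 648 := by
  exact main_thm s hirr hfin
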